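/- arXiv:1601.07113 — 3 statements merged into one kernel-verified Lean document; each statement's English description precedes it below -/
import Mathlib

section
/- Let α ≥ 3, β > 0, t₀ > 0, let Φ : H → ℝ be convex and twice continuously differentiable with argmin Φ nonempty, and let x : [t₀, ∞) → H be a solution of (DIN-AVD). Then ∫_{t₀}^∞ t²‖∇Φ(x(t))‖² dt < ∞, and there is a constant C with ‖ẋ(t) + β∇Φ(x(t))‖ ≤ C/t for all t ≥ t₀. If moreover ∇Φ is Lipschitz continuous on bounded subsets of H, then there exist C′ and T ≥ t₀ such that ‖ẍ(t)‖ ≤ C′/√(ln t) for all t ≥ T. -/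
open Filter MeasureTheory Set
open scoped Topology RealInnerProductSpace

variable {H : Type*} [NormedAddCommGroup H] [InnerProductSpace ℝ H] [CompleteSpace H]

/-- `x`, together with its first and second derivatives `x'`, `x''`, is a twice continuously
differentiable solution of (DIN-AVD) on `[t₀, ∞)`:
`ẍ(t) + (α/t) ẋ(t) + β ∇²Φ(x(t)) ẋ(t) + ∇Φ(x(t)) = 0`. -/
def IsDINAVDSolution (α β t₀ : ℝ) (Φ : H → ℝ) (x x' x'' : ℝ → H) : Prop :=
  (∀ t ∈ Set.Ici t₀, HasDerivAt x (x' t) t) ∧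
  (∀ t ∈ Set.Ici t₀, HasDerivAt x' (x'' t) t) ∧
  ContinuousOn x'' (Set.Ici t₀) ∧
  ∀ t ∈ Set.Ici t₀,
    x'' t + (α / t) • x' t + β • (fderiv ℝ (gradient Φ) (x t)) (x' t)
      + gradient Φ (x t) = 0

/-!
For a minimizer `z`, convexity makes
`t²(Φ(x) - Φ(z)) + t/(t - β) · ‖(α - 1)(x - z) + t(ẋ + β∇Φ(x))‖²/2`
a Lyapunov function on `t > β`, whose derivative is at most `-βt²‖∇Φ(x)‖²`; integrating this
inequality gives the integral estimate. Boundedness of the Lyapunov function bounds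
`w = (α - 1)(x - z) + t(ẋ + β∇Φ(x))`, and pairing `w` with `x - z` shows that
`‖x - z‖² + t d/dt ‖x - z‖²` is bounded above, hence so is `‖x - z‖`, which leaves
`ẋ + β∇Φ(x) = O(1/t)`. When `∇Φ` is Lipschitz on bounded sets, one gradient step shows
`‖∇Φ(x)‖² ≤ 4K(Φ(x) - Φ(z)) = O(1/t²)`, so `ẋ = O(1/t)`, and the equation itself yields
`ẍ = O(1/t)`, which is stronger than `O(1/√(ln t))`.
-/

open Asymptotics Metric

section RealAnalysis

theorem sqrt_log_le_self {t : ℝ} (ht : 0 < t) : √(Real.log t) ≤ t :=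
  Real.sqrt_le_iff.2 ⟨ht.le, by nlinarith [Real.log_le_sub_one_of_pos ht]⟩

theorem exists_tendsto_atTop_of_antitoneOn_Ici {f : ℝ → ℝ} {a : ℝ} (hf : AntitoneOn f (Ici a))
    (hbdd : BddBelow (f '' Ici a)) : ∃ l, Tendsto f atTop (𝓝 l) := by
  have hanti : Antitone fun t => f (max a t) := fun s t hst =>
    hf (le_max_left a s) (le_max_left a t) (max_le_max_left a hst)
  have hrange : BddBelow (range fun t => f (max a t)) :=
    hbdd.mono (range_subset_iff.2 fun t => mem_image_of_mem f (le_max_left a t))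
  refine ⟨_, (tendsto_atTop_ciInf hanti hrange).congr' ?_⟩
  filter_upwards [eventually_ge_atTop a] with t ht
  rw [max_eq_right ht]

theorem antitoneOn_Ici_of_hasDerivAt_nonpos {f f' : ℝ → ℝ} {a : ℝ}
    (hf : ∀ t ∈ Ici a, HasDerivAt f (f' t) t) (hf' : ∀ t ∈ Ici a, f' t ≤ 0) :
    AntitoneOn f (Ici a) :=
  antitoneOn_of_hasDerivWithinAt_nonpos (convex_Ici a)
    (fun t ht => (hf t ht).continuousAt.continuousWithinAt)
    (fun t ht => (hf t (interior_subset ht)).hasDerivWithinAt)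
    (fun t ht => hf' t (interior_subset ht))

theorem integrableOn_Ioi_of_hasDerivAt_le_neg {φ f f' : ℝ → ℝ} {a : ℝ}
    (hφ : AEStronglyMeasurable φ (volume.restrict (Ioi a))) (hφ₀ : ∀ t ∈ Ici a, 0 ≤ φ t)
    (hf : ∀ t ∈ Ici a, HasDerivAt f (f' t) t) (hf' : ∀ t ∈ Ici a, f' t ≤ -φ t)
    (hbdd : BddBelow (f '' Ici a)) : IntegrableOn φ (Ioi a) := by
  have hnonpos : ∀ t ∈ Ici a, f' t ≤ 0 := fun t ht =>
    (hf' t ht).trans (neg_nonpos.2 (hφ₀ t ht))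
  obtain ⟨l, hl⟩ := exists_tendsto_atTop_of_antitoneOn_Ici
    (antitoneOn_Ici_of_hasDerivAt_nonpos hf hnonpos) hbdd
  have hint : IntegrableOn f' (Ioi a) :=
    integrableOn_Ioi_deriv_of_nonpos' hf (fun t ht => hnonpos t (Ioi_subset_Ici_self ht)) hl
  refine Integrable.mono' hint.neg hφ ?_
  filter_upwards [ae_restrict_mem measurableSet_Ioi] with t ht
  have hat : t ∈ Ici a := Ioi_subset_Ici_self ht
  rw [Real.norm_of_nonneg (hφ₀ t hat), Pi.neg_apply]
  exact le_neg_of_le_neg (hf' t hat)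

theorem le_max_of_add_mul_deriv_le {h h' : ℝ → ℝ} {a B : ℝ} (ha : 0 < a)
    (hh : ∀ t ∈ Ici a, HasDerivAt h (h' t) t) (hle : ∀ t ∈ Ici a, h t + t * h' t ≤ B)
    {t : ℝ} (ht : a ≤ t) : h t ≤ max (h a) B := by
  have hanti : AntitoneOn (fun s => s * (h s - B)) (Ici a) :=
    antitoneOn_Ici_of_hasDerivAt_nonpos
      (fun s hs => (hasDerivAt_id s).mul ((hh s hs).sub_const B))
      (fun s hs => by simp only [id]; linarith [hle s hs])
  have hmul : t * (h t - B) ≤ a * (h a - B) := hanti self_mem_Ici ht ht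
  by_contra! hlt
  obtain ⟨hlt_a, hlt_B⟩ := max_lt_iff.1 hlt
  nlinarith

variable {E : Type*} [NormedAddCommGroup E]

theorem isBigO_inv_of_forall_norm_smul_le [NormedSpace ℝ E] {f : ℝ → E} {a M : ℝ}
    (hf : ∀ t ≥ a, ‖t • f t‖ ≤ M) : f =O[atTop] fun t => t⁻¹ := by
  refine IsBigO.of_bound M ?_
  filter_upwards [eventually_ge_atTop a, eventually_gt_atTop 0] with t hta ht
  rw [norm_inv, ← div_eq_mul_inv, le_div_iff₀ (norm_pos_iff.2 ht.ne'), mul_comm, ← norm_smul]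
  exact hf t hta

theorem exists_forall_norm_le_div_of_isBigO {f : ℝ → E} {a : ℝ} (ha : 0 < a)
    (hf : ContinuousOn f (Ici a)) (hO : f =O[atTop] fun t => t⁻¹) :
    ∃ C, ∀ t, a ≤ t → ‖f t‖ ≤ C / t := by
  obtain ⟨c, hc⟩ := hO.bound
  obtain ⟨T, hT⟩ := eventually_atTop.1 hc
  obtain ⟨M, hM⟩ := isCompact_Icc.exists_bound_of_continuousOn
    (hf.mono (Icc_subset_Ici_self : Icc a T ⊆ Ici a))
  refine ⟨max (M * T) c, fun t hat => ?_⟩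
  have ht : 0 < t := ha.trans_le hat
  rw [le_div_iff₀ ht]
  rcases le_total t T with htT | hTt
  · calc ‖f t‖ * t ≤ M * T :=
          mul_le_mul (hM t ⟨hat, htT⟩) htT ht.le ((norm_nonneg _).trans (hM t ⟨hat, htT⟩))
      _ ≤ max (M * T) c := le_max_left _ _
  · have hle := hT t hTt
    rw [norm_inv, Real.norm_of_nonneg ht.le, ← div_eq_mul_inv, le_div_iff₀ ht] at hle
    exact hle.trans (le_max_right _ _)

theorem exists_forall_norm_le_div_sqrt_log {f : ℝ → E} {a : ℝ}
    (hf : ∃ C, ∀ t, a ≤ t → ‖f t‖ ≤ C / t) :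
    ∃ C T : ℝ, a ≤ T ∧ ∀ t, T ≤ t → ‖f t‖ ≤ C / √(Real.log t) := by
  obtain ⟨C, hC⟩ := hf
  refine ⟨|C|, max a 2, le_max_left _ _, fun t ht => ?_⟩
  obtain ⟨hat, ht₂⟩ := max_le_iff.1 ht
  have hlog : 0 < Real.log t := Real.log_pos (by linarith)
  calc ‖f t‖ ≤ C / t := hC t hat
    _ ≤ |C| / t := by gcongr; exact le_abs_self C
    _ ≤ |C| / √(Real.log t) := by gcongr; exact sqrt_log_le_self (by linarith)

end RealAnalysis

section Gradient

theorem hasDerivAt_comp_of_hasGradientAt {f : H → ℝ} {c : ℝ → H} {g c' : H} {t : ℝ}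
    (hf : HasGradientAt f g (c t)) (hc : HasDerivAt c c' t) :
    HasDerivAt (fun s => f (c s)) ⟪g, c'⟫ t :=
  hf.hasFDerivAt.comp_hasDerivAt t hc

theorem differentiable_gradient_of_contDiff {f : H → ℝ} (hf : ContDiff ℝ 2 f) :
    Differentiable ℝ (gradient f) :=
  (InnerProductSpace.toDual ℝ H).symm.differentiable.comp
    ((hf.fderiv_right (m := 1) (by norm_num)).differentiable one_ne_zero)

theorem gradient_eq_zero_of_forall_le {f : H → ℝ} {z : H} (hz : ∀ w, f z ≤ f w) :
    gradient f z = 0 := by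
  have hfderiv : fderiv ℝ f z = 0 := IsLocalMin.fderiv_eq_zero (Eventually.of_forall hz)
  rw [gradient, hfderiv, map_zero]

theorem sub_le_inner_gradient_of_convexOn {s : Set H} {f : H → ℝ} (hf : ConvexOn ℝ s f)
    {a b g : H} (ha : a ∈ s) (hb : b ∈ s) (hg : HasGradientAt f g a) :
    f a - f b ≤ ⟪g, a - b⟫ := by
  let line : ℝ →ᵃ[ℝ] H := AffineMap.lineMap a b
  have hconv : ConvexOn ℝ (line ⁻¹' s) (f ∘ line) := hf.comp_affineMap line
  have hderiv : HasDerivAt (f ∘ line) ⟪g, b - a⟫ 0 :=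
    hasDerivAt_comp_of_hasGradientAt (by simpa [line] using hg) AffineMap.hasDerivAt_lineMap
  have hslope := hconv.le_slope_of_hasDerivAt (by simpa [line] using ha)
    (by simpa [line] using hb) one_pos hderiv
  simp only [line, slope_def_field, Function.comp_apply, AffineMap.lineMap_apply_zero,
    AffineMap.lineMap_apply_one, sub_zero, div_one] at hslope
  rw [← neg_sub b a, inner_neg_right]
  linarith

theorem mul_norm_sq_le_sub_of_gradient_step {s : Set H} {f : H → ℝ} (hf : ConvexOn ℝ s f)
    {p g g' : H} {c : ℝ} (hc : 0 ≤ c) (hp : p ∈ s) (hp' : p - c • g ∈ s)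
    (hg' : HasGradientAt f g' (p - c • g)) (hgg' : ‖g - g'‖ ≤ ‖g‖ / 2) :
    c * ‖g‖ ^ 2 ≤ 2 * (f p - f (p - c • g)) := by
  have hgrad : f (p - c • g) - f p ≤ -(c * ⟪g', g⟫) := by
    simpa [inner_neg_right, inner_smul_right] using sub_le_inner_gradient_of_convexOn hf hp' hp hg'
  have hinner : ‖g‖ ^ 2 ≤ 2 * ⟪g', g⟫ := by
    have hcs : ‖g‖ ^ 2 - ⟪g', g⟫ ≤ ‖g‖ / 2 * ‖g‖ := calc
      ‖g‖ ^ 2 - ⟪g', g⟫ = ⟪g - g', g⟫ := by rw [inner_sub_left, real_inner_self_eq_norm_sq]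
      _ ≤ ‖g - g'‖ * ‖g‖ := real_inner_le_norm _ _
      _ ≤ ‖g‖ / 2 * ‖g‖ := by gcongr
    linarith
  nlinarith

theorem norm_gradient_sq_le_of_lipschitzOnWith {f : H → ℝ} (hconv : ConvexOn ℝ univ f)
    (hf : Differentiable ℝ f) {z : H} (hz : ∀ w, f z ≤ f w) {K : NNReal} {r : ℝ}
    (hK : LipschitzOnWith K (gradient f) (closedBall z (2 * r))) {p : H}
    (hp : p ∈ closedBall z r) : ‖gradient f p‖ ^ 2 ≤ 4 * K * (f p - f z) := by
  set g := gradient f p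
  rw [mem_closedBall, dist_eq_norm] at hp
  have hr : 0 ≤ r := (norm_nonneg _).trans hp
  have hp₂ : p ∈ closedBall z (2 * r) := by rw [mem_closedBall, dist_eq_norm]; linarith
  have hgK : ‖g‖ ≤ K * ‖p - z‖ := by
    simpa [gradient_eq_zero_of_forall_le hz] using
      hK.norm_sub_le hp₂ (mem_closedBall_self (by positivity))
  obtain rfl | hK₀ := eq_zero_or_pos K
  · have hg₀ : g = 0 := by simpa using hgK
    simp [hg₀]
  let c : ℝ := (2 * K)⁻¹
  have hcK : c * (2 * K) = 1 := inv_mul_cancel₀ (by positivity)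
  have hstep : ‖c • g‖ = c * ‖g‖ := by rw [norm_smul, Real.norm_of_nonneg (by positivity)]
  have hmem : p - c • g ∈ closedBall z (2 * r) := by
    rw [mem_closedBall, dist_eq_norm]
    calc ‖p - c • g - z‖ = ‖p - z - c • g‖ := by rw [sub_right_comm]
      _ ≤ ‖p - z‖ + c * ‖g‖ := (norm_sub_le _ _).trans_eq (by rw [hstep])
      _ ≤ ‖p - z‖ + c * (K * ‖p - z‖) := by gcongr
      _ ≤ 2 * r := by nlinarith
  have hhalf : ‖g - gradient f (p - c • g)‖ ≤ ‖g‖ / 2 := calc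
    ‖g - gradient f (p - c • g)‖ ≤ K * ‖c • g‖ := by simpa using hK.norm_sub_le hp₂ hmem
    _ = c * (2 * K) * ‖g‖ / 2 := by rw [hstep]; ring
    _ = ‖g‖ / 2 := by rw [hcK, one_mul]
  have hdecrease := mul_norm_sq_le_sub_of_gradient_step hconv (by positivity) (mem_univ p)
    (mem_univ _) (hf _).hasGradientAt hhalf
  calc ‖g‖ ^ 2 = 2 * K * (c * ‖g‖ ^ 2) := by linear_combination -‖g‖ ^ 2 * hcK
    _ ≤ 2 * K * (2 * (f p - f z)) :=
        mul_le_mul_of_nonneg_left (by linarith [hz (p - c • g)]) (by positivity)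
    _ = 4 * K * (f p - f z) := by ring

end Gradient

section Lyapunov

/-- The vector `(α - 1)(x - z) + t(ẋ + β∇Φ(x))` whose norm enters the Lyapunov function of
(DIN-AVD) with respect to the reference point `z`; `x'` stands for `ẋ`. -/
noncomputable def anchoredMomentum (α β : ℝ) (Φ : H → ℝ) (z : H) (x x' : ℝ → H) (t : ℝ) : H :=
  (α - 1) • (x t - z) + t • (x' t + β • gradient Φ (x t))

/-- The Lyapunov function `t²(Φ(x) - Φ(z)) + t/(t - β) · ‖(α - 1)(x - z) + t(ẋ + β∇Φ(x))‖²/2` of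
(DIN-AVD), to be used for `t > β` only. The weight `t/(t - β)` turns the derivative `(β - t)∇Φ(x)`
of the vector under the norm into `-t∇Φ(x)`, so that the terms `t²⟪∇Φ(x), ẋ⟫` cancel. -/
noncomputable def energy (α β : ℝ) (Φ : H → ℝ) (z : H) (x x' : ℝ → H) (t : ℝ) : ℝ :=
  t ^ 2 * (Φ (x t) - Φ z) + t / (t - β) * (‖anchoredMomentum α β Φ z x x' t‖ ^ 2 / 2)

variable {α β t : ℝ} {Φ : H → ℝ} {z : H} {x x' : ℝ → H}

theorem sq_mul_sub_le_energy (hβt : β < t) (ht : 0 ≤ t) :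
    t ^ 2 * (Φ (x t) - Φ z) ≤ energy α β Φ z x x' t :=
  le_add_of_nonneg_right (mul_nonneg (div_nonneg ht (sub_pos.2 hβt).le) (by positivity))

theorem energy_nonneg (hβt : β < t) (ht : 0 ≤ t) (hz : ∀ w, Φ z ≤ Φ w) :
    0 ≤ energy α β Φ z x x' t :=
  (mul_nonneg (sq_nonneg t) (sub_nonneg.2 (hz _))).trans (sq_mul_sub_le_energy hβt ht)

theorem norm_anchoredMomentum_sq_le_energy (hβ : 0 ≤ β) (hβt : β < t) (hz : ∀ w, Φ z ≤ Φ w) :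
    ‖anchoredMomentum α β Φ z x x' t‖ ^ 2 ≤ 2 * energy α β Φ z x x' t := by
  have hpotential : 0 ≤ t ^ 2 * (Φ (x t) - Φ z) := mul_nonneg (sq_nonneg t) (sub_nonneg.2 (hz _))
  have hweight : 1 ≤ t / (t - β) := (one_le_div (sub_pos.2 hβt)).2 (sub_le_self t hβ)
  have hkinetic := le_mul_of_one_le_left
    (show 0 ≤ ‖anchoredMomentum α β Φ z x x' t‖ ^ 2 / 2 by positivity) hweight
  unfold energy
  linarith

end Lyapunov

namespace IsDINAVDSolution

variable {α β t₀ : ℝ} {Φ : H → ℝ} {x x' x'' : ℝ → H}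

theorem mono (hsol : IsDINAVDSolution α β t₀ Φ x x' x'') {T : ℝ} (hT : t₀ ≤ T) :
    IsDINAVDSolution α β T Φ x x' x'' :=
  have hsub : Ici T ⊆ Ici t₀ := Ici_subset_Ici.2 hT
  ⟨fun t ht => hsol.1 t (hsub ht), fun t ht => hsol.2.1 t (hsub ht), hsol.2.2.1.mono hsub,
    fun t ht => hsol.2.2.2 t (hsub ht)⟩

theorem continuousOn_gradient (hsol : IsDINAVDSolution α β t₀ Φ x x' x'')
    (hΦ' : Continuous (gradient Φ)) : ContinuousOn (fun t => gradient Φ (x t)) (Ici t₀) :=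
  hΦ'.comp_continuousOn fun t ht => (hsol.1 t ht).continuousAt.continuousWithinAt

theorem continuousOn_sq_mul_norm_gradient_sq (hsol : IsDINAVDSolution α β t₀ Φ x x' x'')
    (hΦ' : Continuous (gradient Φ)) :
    ContinuousOn (fun t => t ^ 2 * ‖gradient Φ (x t)‖ ^ 2) (Ici t₀) :=
  (continuousOn_id.pow 2).mul ((hsol.continuousOn_gradient hΦ').norm.pow 2)

theorem continuousOn_velocity (hsol : IsDINAVDSolution α β t₀ Φ x x' x'') :
    ContinuousOn x' (Ici t₀) :=
  fun t ht => (hsol.2.1 t ht).continuousAt.continuousWithinAt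

theorem hasDerivAt_anchoredMomentum (hsol : IsDINAVDSolution α β t₀ Φ x x' x'') (z : H)
    (hΦ' : Differentiable ℝ (gradient Φ)) {t : ℝ} (ht : t ∈ Ici t₀) (ht₀ : t ≠ 0) :
    HasDerivAt (anchoredMomentum α β Φ z x x') ((β - t) • gradient Φ (x t)) t := by
  obtain ⟨hx, hx', -, hode⟩ := hsol
  have hgrad : HasDerivAt (fun s => gradient Φ (x s)) (fderiv ℝ (gradient Φ) (x t) (x' t)) t :=
    (hΦ' (x t)).hasFDerivAt.comp_hasDerivAt t (hx t ht)
  have hmomentum := (((hx t ht).sub_const z).const_smul (α - 1)).add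
    ((hasDerivAt_id t).smul ((hx' t ht).add (hgrad.const_smul β)))
  refine hmomentum.congr_deriv ?_
  have hacc : x'' t + β • fderiv ℝ (gradient Φ) (x t) (x' t)
      = -((α / t) • x' t) - gradient Φ (x t) := by
    rw [← sub_eq_zero, ← hode t ht]; abel
  simp only [id, Pi.add_apply, Pi.smul_apply]
  rw [hacc, smul_sub, smul_neg, smul_smul, mul_div_cancel₀ _ ht₀]
  module

theorem hasDerivAt_energy (hsol : IsDINAVDSolution α β t₀ Φ x x' x'') (z : H)
    (hΦ : Differentiable ℝ Φ) (hΦ' : Differentiable ℝ (gradient Φ)) {t : ℝ} (ht : t ∈ Ici t₀)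
    (ht₀ : t ≠ 0) (htβ : t ≠ β) :
    HasDerivAt (energy α β Φ z x x')
      (t * (2 * (Φ (x t) - Φ z) - (α - 1) * ⟪gradient Φ (x t), x t - z⟫)
        - β * (t ^ 2 * ‖gradient Φ (x t)‖ ^ 2)
        - β / (t - β) ^ 2 * (‖anchoredMomentum α β Φ z x x' t‖ ^ 2 / 2)) t := by
  have hsub : t - β ≠ 0 := sub_ne_zero.2 htβ
  have hvalue := hasDerivAt_comp_of_hasGradientAt (hΦ (x t)).hasGradientAt (hsol.1 t ht)
  have hweight := (hasDerivAt_id t).div ((hasDerivAt_id t).sub_const β) hsub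
  have hmomentum := hsol.hasDerivAt_anchoredMomentum z hΦ' ht ht₀
  have henergy := ((hasDerivAt_pow 2 t).mul (hvalue.sub_const (Φ z))).add
    (hweight.mul (hmomentum.norm_sq.div_const 2))
  refine henergy.congr_deriv ?_
  have hinner : ⟪anchoredMomentum α β Φ z x x' t, gradient Φ (x t)⟫
      = (α - 1) * ⟪gradient Φ (x t), x t - z⟫
        + t * (⟪gradient Φ (x t), x' t⟫ + β * ‖gradient Φ (x t)‖ ^ 2) := by
    rw [real_inner_comm, anchoredMomentum]
    simp only [inner_add_right, inner_smul_right, real_inner_self_eq_norm_sq]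
  simp only [inner_smul_right, hinner, id, Pi.div_apply]
  field_simp
  ring

theorem deriv_energy_le (hsol : IsDINAVDSolution α β t₀ Φ x x' x'') (hα : 3 ≤ α) (hβ : 0 ≤ β)
    (hconv : ConvexOn ℝ univ Φ) (hΦ : Differentiable ℝ Φ) (hΦ' : Differentiable ℝ (gradient Φ))
    {z : H} (hz : ∀ w, Φ z ≤ Φ w) {t : ℝ} (ht : t ∈ Ici t₀) (hβt : β < t) :
    deriv (energy α β Φ z x x') t ≤ -(β * (t ^ 2 * ‖gradient Φ (x t)‖ ^ 2)) := by
  have ht₀ : 0 < t := hβ.trans_lt hβt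
  rw [(hsol.hasDerivAt_energy z hΦ hΦ' ht ht₀.ne' hβt.ne').deriv]
  have hgap : 0 ≤ Φ (x t) - Φ z := sub_nonneg.2 (hz _)
  have hconvex : Φ (x t) - Φ z ≤ ⟪gradient Φ (x t), x t - z⟫ :=
    sub_le_inner_gradient_of_convexOn hconv (mem_univ _) (mem_univ _) (hΦ _).hasGradientAt
  have hpotential :
      t * (2 * (Φ (x t) - Φ z) - (α - 1) * ⟪gradient Φ (x t), x t - z⟫) ≤ 0 :=
    mul_nonpos_of_nonneg_of_nonpos ht₀.le (by nlinarith)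
  have hkinetic : 0 ≤ β / (t - β) ^ 2 * (‖anchoredMomentum α β Φ z x x' t‖ ^ 2 / 2) := by
    positivity
  linarith

theorem differentiableAt_energy (hsol : IsDINAVDSolution α β t₀ Φ x x' x'') (z : H)
    (hβ : 0 ≤ β) (hβt₀ : β < t₀) (hΦ : Differentiable ℝ Φ) (hΦ' : Differentiable ℝ (gradient Φ))
    {t : ℝ} (ht : t ∈ Ici t₀) : DifferentiableAt ℝ (energy α β Φ z x x') t :=
  have hβt : β < t := hβt₀.trans_le ht
  (hsol.hasDerivAt_energy z hΦ hΦ' ht (hβ.trans_lt hβt).ne' hβt.ne').differentiableAt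

section BoundedEnergy

variable (hsol : IsDINAVDSolution α β t₀ Φ x x' x'') (hα : 3 ≤ α) (hβ : 0 ≤ β) (hβt₀ : β < t₀)
  (hconv : ConvexOn ℝ univ Φ) (hΦ : Differentiable ℝ Φ) (hΦ' : Differentiable ℝ (gradient Φ))
  {z : H} (hz : ∀ w, Φ z ≤ Φ w)

include hsol hα hβ hβt₀ hconv hΦ hΦ' hz

theorem energy_le {t : ℝ} (ht : t ∈ Ici t₀) :
    energy α β Φ z x x' t ≤ energy α β Φ z x x' t₀ :=
  antitoneOn_Ici_of_hasDerivAt_nonpos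
    (fun _ hs => (hsol.differentiableAt_energy z hβ hβt₀ hΦ hΦ' hs).hasDerivAt)
    (fun _ hs => (hsol.deriv_energy_le hα hβ hconv hΦ hΦ' hz hs (hβt₀.trans_le hs)).trans
      (neg_nonpos.2 (by positivity)))
    self_mem_Ici ht ht

theorem norm_anchoredMomentum_sq_le_energy_initial {t : ℝ} (ht : t ∈ Ici t₀) :
    ‖anchoredMomentum α β Φ z x x' t‖ ^ 2 ≤ 2 * energy α β Φ z x x' t₀ :=
  (norm_anchoredMomentum_sq_le_energy hβ (hβt₀.trans_le ht) hz).trans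
    (mul_le_mul_of_nonneg_left (hsol.energy_le hα hβ hβt₀ hconv hΦ hΦ' hz ht) zero_le_two)

theorem integrableOn_Ioi_sq_mul_norm_gradient_sq (hβ₀ : β ≠ 0) :
    IntegrableOn (fun t => t ^ 2 * ‖gradient Φ (x t)‖ ^ 2) (Ioi t₀) := by
  have hmeas : AEStronglyMeasurable (fun t => β * (t ^ 2 * ‖gradient Φ (x t)‖ ^ 2))
      (volume.restrict (Ioi t₀)) :=
    (((hsol.continuousOn_sq_mul_norm_gradient_sq hΦ'.continuous).mono
      Ioi_subset_Ici_self).aestronglyMeasurable measurableSet_Ioi).const_mul β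
  have hbdd : BddBelow (energy α β Φ z x x' '' Ici t₀) :=
    ⟨0, forall_mem_image.2 fun t ht =>
      have hβt : β < t := hβt₀.trans_le ht
      energy_nonneg hβt (hβ.trans hβt.le) hz⟩
  have hint := integrableOn_Ioi_of_hasDerivAt_le_neg hmeas (fun t _ => by positivity)
    (fun t ht => (hsol.differentiableAt_energy z hβ hβt₀ hΦ hΦ' ht).hasDerivAt)
    (fun t ht => hsol.deriv_energy_le hα hβ hconv hΦ hΦ' hz ht (hβt₀.trans_le ht)) hbdd
  exact (integrable_const_mul_iff (IsUnit.mk0 β hβ₀) _).1 hint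

theorem norm_sub_sq_le_max {t : ℝ} (ht : t ∈ Ici t₀) :
    ‖x t - z‖ ^ 2 ≤ max (‖x t₀ - z‖ ^ 2) (2 * energy α β Φ z x x' t₀) := by
  refine le_max_of_add_mul_deriv_le (h := fun s => ‖x s - z‖ ^ 2) (hβ.trans_lt hβt₀)
    (fun s hs => ((hsol.1 s hs).sub_const z).norm_sq) (fun s hs => ?_) ht
  have hs₀ : 0 < s := (hβ.trans_lt hβt₀).trans_le hs
  set w := anchoredMomentum α β Φ z x x' s with hw
  have henergy : ‖w‖ ^ 2 ≤ 2 * energy α β Φ z x x' t₀ :=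
    hsol.norm_anchoredMomentum_sq_le_energy_initial hα hβ hβt₀ hconv hΦ hΦ' hz hs
  have hmonotone : 0 ≤ ⟪x s - z, gradient Φ (x s)⟫ := by
    rw [real_inner_comm]
    exact (sub_nonneg.2 (hz (x s))).trans
      (sub_le_inner_gradient_of_convexOn hconv (mem_univ _) (mem_univ _) (hΦ _).hasGradientAt)
  have hinner : ⟪x s - z, w⟫ = (α - 1) * ‖x s - z‖ ^ 2
      + s * (⟪x s - z, x' s⟫ + β * ⟪x s - z, gradient Φ (x s)⟫) := by
    simp only [hw, anchoredMomentum, inner_add_right, inner_smul_right,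
      real_inner_self_eq_norm_sq]
  have hdamping : 0 ≤ s * (β * ⟪x s - z, gradient Φ (x s)⟫) := by positivity
  have hyoung : 2 * ⟪x s - z, w⟫ ≤ ‖x s - z‖ ^ 2 + ‖w‖ ^ 2 := by
    linarith [sq_nonneg ‖x s - z - w‖, norm_sub_sq_real (x s - z) w]
  nlinarith [sq_nonneg ‖x s - z‖]

theorem exists_norm_sub_le : ∃ R, ∀ t ∈ Ici t₀, ‖x t - z‖ ≤ R :=
  ⟨_, fun _ ht => Real.le_sqrt_of_sq_le
    (hsol.norm_sub_sq_le_max hα hβ hβt₀ hconv hΦ hΦ' hz ht)⟩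

theorem isBigO_velocity_add_gradient :
    (fun t => x' t + β • gradient Φ (x t)) =O[atTop] fun t => t⁻¹ := by
  obtain ⟨R, hR⟩ := hsol.exists_norm_sub_le hα hβ hβt₀ hconv hΦ hΦ' hz
  refine isBigO_inv_of_forall_norm_smul_le (a := t₀)
    (M := √(2 * energy α β Φ z x x' t₀) + (α - 1) * R) fun t ht => ?_
  have hmomentum : ‖anchoredMomentum α β Φ z x x' t‖ ≤ √(2 * energy α β Φ z x x' t₀) :=
    Real.le_sqrt_of_sq_le
      (hsol.norm_anchoredMomentum_sq_le_energy_initial hα hβ hβt₀ hconv hΦ hΦ' hz ht)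
  calc ‖t • (x' t + β • gradient Φ (x t))‖
      = ‖anchoredMomentum α β Φ z x x' t - (α - 1) • (x t - z)‖ := by
        rw [anchoredMomentum, add_sub_cancel_left]
    _ ≤ ‖anchoredMomentum α β Φ z x x' t‖ + (α - 1) * ‖x t - z‖ :=
        (norm_sub_le _ _).trans_eq (by rw [norm_smul, Real.norm_of_nonneg (by linarith)])
    _ ≤ √(2 * energy α β Φ z x x' t₀) + (α - 1) * R :=
        add_le_add hmomentum (mul_le_mul_of_nonneg_left (hR t ht) (by linarith))

theorem isBigO_gradient
    (hlip : ∀ s : Set H, Bornology.IsBounded s → ∃ K : NNReal, LipschitzOnWith K (gradient Φ) s) :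
    (fun t => gradient Φ (x t)) =O[atTop] fun t => t⁻¹ := by
  obtain ⟨R, hR⟩ := hsol.exists_norm_sub_le hα hβ hβt₀ hconv hΦ hΦ' hz
  obtain ⟨K, hK⟩ := hlip (closedBall z (2 * R)) isBounded_closedBall
  refine isBigO_inv_of_forall_norm_smul_le (a := t₀)
    (M := √(4 * K * energy α β Φ z x x' t₀)) fun t ht => Real.le_sqrt_of_sq_le ?_
  have hβt : β < t := hβt₀.trans_le ht
  calc ‖t • gradient Φ (x t)‖ ^ 2 = t ^ 2 * ‖gradient Φ (x t)‖ ^ 2 := by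
        rw [norm_smul, mul_pow, Real.norm_eq_abs, sq_abs]
    _ ≤ t ^ 2 * (4 * K * (Φ (x t) - Φ z)) := by
        gcongr
        exact norm_gradient_sq_le_of_lipschitzOnWith hconv hΦ hz hK
          (mem_closedBall_iff_norm.2 (hR t ht))
    _ = 4 * K * (t ^ 2 * (Φ (x t) - Φ z)) := by ring
    _ ≤ 4 * K * energy α β Φ z x x' t₀ := by
        gcongr
        exact (sq_mul_sub_le_energy hβt (hβ.trans hβt.le)).trans
          (hsol.energy_le hα hβ hβt₀ hconv hΦ hΦ' hz ht)

theorem isBigO_velocity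
    (hlip : ∀ s : Set H, Bornology.IsBounded s → ∃ K : NNReal, LipschitzOnWith K (gradient Φ) s) :
    x' =O[atTop] fun t => t⁻¹ := by
  have hdiff := (hsol.isBigO_velocity_add_gradient hα hβ hβt₀ hconv hΦ hΦ' hz).sub
    ((hsol.isBigO_gradient hα hβ hβt₀ hconv hΦ hΦ' hz hlip).const_smul_left β)
  simpa only [Pi.smul_apply, add_sub_cancel_right] using hdiff

theorem isBigO_acceleration
    (hlip : ∀ s : Set H, Bornology.IsBounded s → ∃ K : NNReal, LipschitzOnWith K (gradient Φ) s) :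
    x'' =O[atTop] fun t => t⁻¹ := by
  have hvelocity := hsol.isBigO_velocity hα hβ hβt₀ hconv hΦ hΦ' hz hlip
  have hfriction : (fun t => (α / t) • x' t) =O[atTop] fun t => t⁻¹ := by
    have hcoeff : Tendsto (fun t => α / t) atTop (𝓝 0) := tendsto_const_nhds.div_atTop tendsto_id
    simpa only [one_smul] using (hcoeff.isBigO_one ℝ).smul hvelocity
  have hhessian : (fun t => fderiv ℝ (gradient Φ) (x t) (x' t)) =O[atTop] fun t => t⁻¹ := by
    obtain ⟨R, hR⟩ := hsol.exists_norm_sub_le hα hβ hβt₀ hconv hΦ hΦ' hz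
    obtain ⟨K, hK⟩ := hlip (ball z (R + 1)) isBounded_ball
    refine (IsBigO.of_bound K ?_).trans hvelocity
    filter_upwards [eventually_ge_atTop t₀] with t ht
    have hmem : x t ∈ ball z (R + 1) :=
      mem_ball_iff_norm.2 ((hR t ht).trans_lt (lt_add_one R))
    exact ContinuousLinearMap.le_of_opNorm_le _
      (norm_fderiv_le_of_lipschitzOn ℝ (isOpen_ball.mem_nhds hmem) hK) _
  have hsum := ((hfriction.add (hhessian.const_smul_left β)).add
    (hsol.isBigO_gradient hα hβ hβt₀ hconv hΦ hΦ' hz hlip)).neg_left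
  refine hsum.congr' ?_ EventuallyEq.rfl
  filter_upwards [eventually_ge_atTop t₀] with t ht
  rw [Pi.smul_apply, neg_eq_iff_add_eq_zero, ← hsol.2.2.2 t ht]
  abel

end BoundedEnergy

end IsDINAVDSolution

theorem stmt7_general (α β t₀ : ℝ) (hα : 3 ≤ α) (hβ : 0 < β) (ht₀ : 0 < t₀)
    (Φ : H → ℝ) (hconv : ConvexOn ℝ univ Φ) (hΦ : Differentiable ℝ Φ)
    (hΦ' : Differentiable ℝ (gradient Φ)) (hne : ∃ z : H, ∀ w, Φ z ≤ Φ w)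
    (x x' x'' : ℝ → H) (hsol : IsDINAVDSolution α β t₀ Φ x x' x'') :
    IntegrableOn (fun t => t ^ 2 * ‖gradient Φ (x t)‖ ^ 2) (Ici t₀) ∧
    (∃ C : ℝ, ∀ t, t₀ ≤ t → ‖x' t + β • gradient Φ (x t)‖ ≤ C / t) ∧
    ((∀ s : Set H, Bornology.IsBounded s →
        ∃ K : NNReal, LipschitzOnWith K (gradient Φ) s) →
      ∃ C : ℝ, ∀ t, t₀ ≤ t → ‖x'' t‖ ≤ C / t) := by
  obtain ⟨z, hz⟩ := hne
  obtain ⟨T, hT, hβT⟩ : ∃ T, t₀ ≤ T ∧ β < T :=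
    ⟨max t₀ (β + 1), le_max_left _ _, (lt_add_one β).trans_le (le_max_right _ _)⟩
  have hsolT := hsol.mono hT
  refine ⟨?_, ?_, fun hlip => ?_⟩
  · rw [← Icc_union_Ioi_eq_Ici hT]
    exact ((hsol.continuousOn_sq_mul_norm_gradient_sq hΦ'.continuous).mono
      Icc_subset_Ici_self).integrableOn_Icc.union
      (hsolT.integrableOn_Ioi_sq_mul_norm_gradient_sq hα hβ.le hβT hconv hΦ hΦ' hz hβ.ne')
  · exact exists_forall_norm_le_div_of_isBigO ht₀
      (hsol.continuousOn_velocity.add ((hsol.continuousOn_gradient hΦ'.continuous).const_smul β))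
      (hsolT.isBigO_velocity_add_gradient hα hβ.le hβT hconv hΦ hΦ' hz)
  · exact exists_forall_norm_le_div_of_isBigO ht₀ hsol.2.2.1
      (hsolT.isBigO_acceleration hα hβ.le hβT hconv hΦ hΦ' hz hlip)

theorem stmt7 (α β t₀ : ℝ) (hα : 3 ≤ α) (hβ : 0 < β) (ht₀ : 0 < t₀)
    (Φ : H → ℝ) (hconv : ConvexOn ℝ Set.univ Φ) (hΦ : ContDiff ℝ 2 Φ)
    (hne : ∃ z : H, ∀ w, Φ z ≤ Φ w)
    (x x' x'' : ℝ → H) (hsol : IsDINAVDSolution α β t₀ Φ x x' x'') :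
    IntegrableOn (fun t => t ^ 2 * ‖gradient Φ (x t)‖ ^ 2) (Set.Ici t₀) ∧
    (∃ C : ℝ, ∀ t, t₀ ≤ t → ‖x' t + β • gradient Φ (x t)‖ ≤ C / t) ∧
    ((∀ s : Set H, Bornology.IsBounded s →
        ∃ K : NNReal, LipschitzOnWith K (gradient Φ) s) →
      ∃ C' T : ℝ, t₀ ≤ T ∧ ∀ t, T ≤ t → ‖x'' t‖ ≤ C' / Real.sqrt (Real.log t)) := by
  obtain ⟨hint, hvelocity, hacceleration⟩ := stmt7_general α β t₀ hα hβ ht₀ Φ hconv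
    (hΦ.differentiable two_ne_zero) (differentiable_gradient_of_contDiff hΦ) hne x x' x'' hsol
  exact ⟨hint, hvelocity, fun hlip => exists_forall_norm_le_div_sqrt_log (hacceleration hlip)⟩
end

section
/- Let α > 3, β > 0, t₀ > 0, let Φ : H → ℝ be convex and twice continuously differentiable with argmin Φ nonempty, and let x : [t₀, ∞) → H be a solution of (DIN-AVD). Then there exists x∞ ∈ argmin Φ such that x(t) converges weakly to x∞ as t → ∞, i.e., ⟨x(t), y⟩ → ⟨x∞, y⟩ for every y ∈ H. -/
open Filter MeasureTheory Set
open scoped Topology RealInnerProductSpace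

variable {H : Type*} [NormedAddCommGroup H] [InnerProductSpace ℝ H] [CompleteSpace H]

open scoped Gradient

/-!
For a minimizer `z` and `2 < l ≤ α - 1`, the energy `𝓔_l` anchored at `z` is eventually
nonincreasing and nonnegative, hence converges. Its leading term gives `t (Φ(x(t)) - min Φ) → 0`,
and its decay makes `∫ ⟪∇Φ(x), x - z⟫` converge. Moreover `𝓔_l` is affine in `l`, so the
coefficient of `l` converges as well. Up to terms with known limits this coefficient is
`t q' + (α - 1) q` with `q = ‖x - z‖² / 2 + β ∫ ⟪∇Φ(x), x - z⟫`. Hence `q`, and with it `‖x - z‖`,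
converges for every minimizer `z`, and Opial's lemma concludes, since convexity makes weak cluster
points of `x` minimizers.
-/

section RealAnalysis

variable {f f' g g' : ℝ → ℝ}

lemma exists_antitoneOn_Ici_of_hasDerivAt_nonpos
    (hf : ∀ᶠ t in atTop, ∃ d ≤ 0, HasDerivAt f d t) : ∃ T, AntitoneOn f (Ici T) := by
  obtain ⟨T, hT⟩ := eventually_atTop.1 hf
  refine ⟨T, antitoneOn_of_deriv_nonpos (convex_Ici T) (fun t ht => ?_) (fun t ht => ?_)
    fun t ht => ?_⟩
  · obtain ⟨d, -, hd⟩ := hT t ht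
    exact hd.continuousAt.continuousWithinAt
  · obtain ⟨d, -, hd⟩ := hT t (interior_subset ht)
    exact hd.differentiableAt.differentiableWithinAt
  · obtain ⟨d, hd0, hd⟩ := hT t (interior_subset ht)
    exact hd.deriv.trans_le hd0

lemma exists_tendsto_of_hasDerivAt_nonpos (hf : ∀ᶠ t in atTop, ∃ d ≤ 0, HasDerivAt f d t)
    {b : ℝ} (hb : ∀ᶠ t in atTop, b ≤ f t) : ∃ a, Tendsto f atTop (𝓝 a) := by
  obtain ⟨T, hT⟩ := exists_antitoneOn_Ici_of_hasDerivAt_nonpos hf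
  obtain ⟨S, hS⟩ := eventually_atTop.1 hb
  have hanti : Antitone fun t => f (max t (max S T)) := fun s t hst =>
    hT ((le_max_right S T).trans (le_max_right _ _)) ((le_max_right S T).trans (le_max_right _ _))
      (max_le_max_right _ hst)
  have hbdd : BddBelow (range fun t => f (max t (max S T))) :=
    ⟨b, forall_mem_range.2 fun t => hS _ ((le_max_left S T).trans (le_max_right _ _))⟩
  refine ⟨_, (tendsto_atTop_ciInf hanti hbdd).congr' ?_⟩
  filter_upwards [eventually_ge_atTop (max S T)] with t ht
  rw [max_eq_left ht]

lemma eventually_div_lt_of_hasDerivAt_le (hf : ∀ᶠ t in atTop, HasDerivAt f (f' t) t)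
    (hg : ∀ᶠ t in atTop, HasDerivAt g (g' t) t) (hg_top : Tendsto g atTop atTop) {c d : ℝ}
    (hle : ∀ᶠ t in atTop, f' t ≤ c * g' t) (hcd : c < d) : ∀ᶠ t in atTop, f t / g t < d := by
  obtain ⟨T, hT⟩ : ∃ T, AntitoneOn (fun t => f t - c * g t) (Ici T) := by
    refine exists_antitoneOn_Ici_of_hasDerivAt_nonpos ?_
    filter_upwards [hf, hg, hle] with t hft hgt ht
    exact ⟨_, sub_nonpos.2 ht, hft.sub (hgt.const_mul c)⟩
  filter_upwards [eventually_ge_atTop T, hg_top.eventually_gt_atTop 0,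
    (hg_top.const_mul_atTop (sub_pos.2 hcd)).eventually_gt_atTop (f T - c * g T)]
    with t htT hgt hbound
  rw [div_lt_iff₀ hgt]
  have hmono : f t - c * g t ≤ f T - c * g T := hT self_mem_Ici htT htT
  linarith

lemma lhopital_top_atTop (hf : ∀ᶠ t in atTop, HasDerivAt f (f' t) t)
    (hg : ∀ᶠ t in atTop, HasDerivAt g (g' t) t) (hg_top : Tendsto g atTop atTop)
    (hg'_pos : ∀ᶠ t in atTop, 0 < g' t) {L : ℝ}
    (hlim : Tendsto (fun t => f' t / g' t) atTop (𝓝 L)) :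
    Tendsto (fun t => f t / g t) atTop (𝓝 L) := by
  refine tendsto_order.2 ⟨fun a ha => ?_, fun b hb => ?_⟩
  · obtain ⟨c, hac, hcL⟩ := exists_between ha
    have hneg : ∀ᶠ t in atTop, -f t / g t < -a := by
      refine eventually_div_lt_of_hasDerivAt_le (hf.mono fun t ht => ht.neg) hg hg_top ?_
        (neg_lt_neg hac)
      filter_upwards [hlim.eventually_const_lt hcL, hg'_pos] with t ht hgt
      rw [lt_div_iff₀ hgt] at ht
      linarith
    filter_upwards [hneg] with t ht
    rwa [neg_div, neg_lt_neg_iff] at ht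
  · obtain ⟨c, hLc, hcb⟩ := exists_between hb
    refine eventually_div_lt_of_hasDerivAt_le hf hg hg_top ?_ hcb
    filter_upwards [hlim.eventually_lt_const hLc, hg'_pos] with t ht hgt
    exact ((div_lt_iff₀ hgt).1 ht).le

-- `t f' + a f = t ^ (1 - a) (t ^ a f)'`, so this is L'Hôpital's rule for `t ^ a f / t ^ a`.
lemma tendsto_of_tendsto_mul_hasDerivAt_add {a L : ℝ} (ha : 0 < a)
    (hf : ∀ᶠ t in atTop, HasDerivAt f (f' t) t)
    (hlim : Tendsto (fun t => t * f' t + a * f t) atTop (𝓝 L)) :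
    Tendsto f atTop (𝓝 (L / a)) := by
  have hpow : ∀ᶠ t : ℝ in atTop, HasDerivAt (fun s => s ^ a) (a * t ^ (a - 1)) t := by
    filter_upwards [eventually_ne_atTop 0] with t ht
    exact Real.hasDerivAt_rpow_const (Or.inl ht)
  have hmul : ∀ᶠ t : ℝ in atTop,
      HasDerivAt (fun s => s ^ a * f s) (a * t ^ (a - 1) * f t + t ^ a * f' t) t := by
    filter_upwards [hpow, hf] with t hpt hft
    exact hpt.mul hft
  have hpos : ∀ᶠ t : ℝ in atTop, 0 < a * t ^ (a - 1) := by
    filter_upwards [eventually_gt_atTop 0] with t ht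
    positivity
  refine (lhopital_top_atTop hmul hpow (tendsto_rpow_atTop ha) hpos
    ((hlim.div_const a).congr' ?_)).congr' ?_
  · filter_upwards [eventually_gt_atTop 0] with t ht
    rw [Real.rpow_sub_one ht.ne']
    field_simp
    ring
  · filter_upwards [eventually_gt_atTop 0] with t ht
    field_simp

lemma hasDerivAt_integral_of_continuousOn_Ici {a t : ℝ} (hf : ContinuousOn f (Ici a))
    (hat : a < t) : HasDerivAt (fun u => ∫ s in a..u, f s) (f t) t := by
  have hIoi : ContinuousOn f (Ioi a) := hf.mono Ioi_subset_Ici_self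
  refine intervalIntegral.integral_hasDerivAt_right ?_
    (hIoi.stronglyMeasurableAtFilter isOpen_Ioi t hat) (hIoi.continuousAt (Ioi_mem_nhds hat))
  exact (hf.mono (uIcc_of_le hat.le ▸ Icc_subset_Ici_self)).intervalIntegrable

end RealAnalysis

section Opial

variable {ι : Type*} {x : ι → H}

lemma exists_tendsto_inner_of_ultrafilter {R : ℝ} (U : Ultrafilter ι) (hR : ∀ᶠ i in U, ‖x i‖ ≤ R) :
    ∃ p : H, ∀ y, Tendsto (fun i => ⟪x i, y⟫) U (𝓝 ⟪p, y⟫) := by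
  let F : ι → WeakDual ℝ H := fun i => StrongDual.toWeakDual (InnerProductSpace.toDual ℝ H (x i))
  have hball : ∀ᶠ i in U,
      F i ∈ WeakDual.toStrongDual ⁻¹' Metric.closedBall (0 : StrongDual ℝ H) R := by
    filter_upwards [hR] with i hi
    simpa [F] using hi
  obtain ⟨φ, -, hφ⟩ := (WeakDual.isCompact_closedBall (𝕜 := ℝ) (0 : StrongDual ℝ H)
    R).ultrafilter_le_nhds (U.map F) (le_principal_iff.2 hball)
  refine ⟨(InnerProductSpace.toDual ℝ H).symm (WeakDual.toStrongDual φ), fun y => ?_⟩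
  rw [InnerProductSpace.toDual_symm_apply]
  exact ((WeakDual.eval_continuous y).tendsto φ).comp hφ

lemma eq_of_tendsto_inner_of_tendsto_norm_sub {E : Type*} [NormedAddCommGroup E]
    [InnerProductSpace ℝ E] {x : ι → E} {l U V : Filter ι} [U.NeBot] [V.NeBot]
    (hU : U ≤ l) (hV : V ≤ l) {p q : E} {a b : ℝ}
    (hp : ∀ y, Tendsto (fun i => ⟪x i, y⟫) U (𝓝 ⟪p, y⟫))
    (hq : ∀ y, Tendsto (fun i => ⟪x i, y⟫) V (𝓝 ⟪q, y⟫))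
    (ha : Tendsto (fun i => ‖x i - p‖) l (𝓝 a)) (hb : Tendsto (fun i => ‖x i - q‖) l (𝓝 b)) :
    p = q := by
  have hinner : Tendsto (fun i => ⟪x i, p - q⟫) l
      (𝓝 ((‖p‖ ^ 2 - ‖q‖ ^ 2 - (a ^ 2 - b ^ 2)) / 2)) := by
    refine ((((ha.pow 2).sub (hb.pow 2)).const_sub (‖p‖ ^ 2 - ‖q‖ ^ 2)).div_const 2).congr
      fun i => ?_
    rw [norm_sub_sq_real, norm_sub_sq_real, inner_sub_right]
    ring
  have hpq : ⟪p, p - q⟫ = ⟪q, p - q⟫ :=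
    (tendsto_nhds_unique (hp _) (hinner.mono_left hU)).trans
      (tendsto_nhds_unique (hq _) (hinner.mono_left hV)).symm
  rw [← sub_eq_zero, ← inner_self_eq_zero (𝕜 := ℝ), inner_sub_left, hpq, sub_self]

lemma opial_exists_tendsto_inner {l : Filter ι} [l.NeBot] {S : Set H} (hS : S.Nonempty)
    (hdist : ∀ z ∈ S, ∃ a, Tendsto (fun i => ‖x i - z‖) l (𝓝 a))
    (hcluster : ∀ (U : Ultrafilter ι) (p : H), ↑U ≤ l →
      (∀ y, Tendsto (fun i => ⟪x i, y⟫) U (𝓝 ⟪p, y⟫)) → p ∈ S) :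
    ∃ p ∈ S, ∀ y, Tendsto (fun i => ⟪x i, y⟫) l (𝓝 ⟪p, y⟫) := by
  obtain ⟨z, hz⟩ := hS
  obtain ⟨c, hc⟩ := hdist z hz
  have hbdd : ∀ᶠ i in l, ‖x i‖ ≤ c + 1 + ‖z‖ := by
    filter_upwards [hc.eventually_lt_const (lt_add_one c)] with i hi
    linarith [norm_le_norm_sub_add (x i) z]
  have hweak : ∀ U : Ultrafilter ι, ↑U ≤ l →
      ∃ p ∈ S, ∀ y, Tendsto (fun i => ⟪x i, y⟫) U (𝓝 ⟪p, y⟫) := fun U hU =>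
    let ⟨p, hp⟩ := exists_tendsto_inner_of_ultrafilter U (hU hbdd)
    ⟨p, hcluster U p hU hp, hp⟩
  obtain ⟨p, hpS, hp⟩ := hweak (Ultrafilter.of l) (Ultrafilter.of_le l)
  refine ⟨p, hpS, fun y => (tendsto_iff_ultrafilter _ _ _).2 fun U hU => ?_⟩
  obtain ⟨q, hqS, hq⟩ := hweak U hU
  obtain ⟨a, ha⟩ := hdist p hpS
  obtain ⟨b, hb⟩ := hdist q hqS
  rw [eq_of_tendsto_inner_of_tendsto_norm_sub (Ultrafilter.of_le l) hU hp hq ha hb]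
  exact hq y

end Opial

section Gradient

variable {Φ : H → ℝ} {p q : H}

lemma hasDerivAt_comp_of_hasGradientAt_s9 {x : ℝ → H} {g v : H} {t : ℝ}
    (hΦ : HasGradientAt Φ g (x t)) (hx : HasDerivAt x v t) :
    HasDerivAt (fun s => Φ (x s)) ⟪g, v⟫ t := by
  simpa [Function.comp_def] using hΦ.hasFDerivAt.comp_hasDerivAt t hx

lemma differentiable_gradient_of_contDiff_s9 (hΦ : ContDiff ℝ 2 Φ) : Differentiable ℝ (∇ Φ) :=
  (InnerProductSpace.toDual ℝ H).symm.differentiable.comp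
    ((hΦ.fderiv_right (m := 1) (by norm_num)).differentiable one_ne_zero)

lemma add_inner_le_of_convexOn_of_hasGradientAt {s : Set H} {g : H} (hconv : ConvexOn ℝ s Φ)
    (hp : p ∈ s) (hq : q ∈ s) (hg : HasGradientAt Φ g p) : Φ p + ⟪g, q - p⟫ ≤ Φ q := by
  have hline : HasDerivAt (fun r : ℝ => Φ (AffineMap.lineMap p q r)) ⟪g, q - p⟫ 0 :=
    hasDerivAt_comp_of_hasGradientAt_s9 (by rwa [AffineMap.lineMap_apply_zero])
      AffineMap.hasDerivAt_lineMap
  have hslope := (hconv.comp_affineMap (AffineMap.lineMap (k := ℝ) p q)).le_slope_of_hasDerivAt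
    (by simpa) (by simpa) zero_lt_one hline
  simp only [slope_def_field, Function.comp_apply, AffineMap.lineMap_apply_one,
    AffineMap.lineMap_apply_zero, sub_zero, div_one] at hslope
  linarith

lemma sub_le_inner_gradient_sub (hconv : ConvexOn ℝ univ Φ) (hΦ : DifferentiableAt ℝ Φ p) (q : H) :
    Φ p - Φ q ≤ ⟪∇ Φ p, p - q⟫ := by
  have h := add_inner_le_of_convexOn_of_hasGradientAt hconv (mem_univ p) (mem_univ q)
    hΦ.hasGradientAt
  rw [← neg_sub p q, inner_neg_right] at h
  linarith

lemma inner_gradient_sub_nonneg (hconv : ConvexOn ℝ univ Φ) (hΦ : DifferentiableAt ℝ Φ p)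
    (hqp : Φ q ≤ Φ p) : 0 ≤ ⟪∇ Φ p, p - q⟫ :=
  (sub_nonneg.2 hqp).trans (sub_le_inner_gradient_sub hconv hΦ q)

lemma le_of_convexOn_of_tendsto_inner {ι : Type*} {l : Filter ι} [l.NeBot] {x : ι → H} {m : ℝ}
    (hconv : ConvexOn ℝ univ Φ) (hΦ : DifferentiableAt ℝ Φ p)
    (hx : ∀ y, Tendsto (fun i => ⟪x i, y⟫) l (𝓝 ⟪p, y⟫))
    (hm : Tendsto (fun i => Φ (x i)) l (𝓝 m)) : Φ p ≤ m := by
  have htangent : Tendsto (fun i => Φ p + ⟪∇ Φ p, x i - p⟫) l (𝓝 (Φ p)) := by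
    simpa [inner_sub_right, real_inner_comm] using
      ((hx (∇ Φ p)).sub_const ⟪p, ∇ Φ p⟫).const_add (Φ p)
  exact le_of_tendsto_of_tendsto' htangent hm fun i =>
    add_inner_le_of_convexOn_of_hasGradientAt hconv (mem_univ p) (mem_univ (x i)) hΦ.hasGradientAt

end Gradient

/-- The vector `l (x - z) + t (ẋ + β ∇Φ(x))`, whose squared norm is the kinetic part of
`dinavdEnergy`. -/
noncomputable def dinavdMomentum (β l : ℝ) (Φ : H → ℝ) (z : H) (x x' : ℝ → H) (t : ℝ) : H :=
  l • (x t - z) + t • (x' t + β • ∇ Φ (x t))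

/-- The Lyapunov function `𝓔_l` of (DIN-AVD) anchored at the point `z`, usually a minimizer of `Φ`.
The factor `t (t - β (l + 2 - α))` is the one for which the terms in `⟪∇Φ(x), ẋ⟫` cancel in the
derivative. -/
noncomputable def dinavdEnergy (α β l : ℝ) (Φ : H → ℝ) (z : H) (x x' : ℝ → H) (t : ℝ) : ℝ :=
  t * (t - β * (l + 2 - α)) * (Φ (x t) - Φ z) + 1 / 2 * ‖dinavdMomentum β l Φ z x x' t‖ ^ 2
    + l * (α - l - 1) / 2 * ‖x t - z‖ ^ 2

lemma dinavdEnergy_sub_dinavdEnergy (α β l m : ℝ) (Φ : H → ℝ) (z : H) (x x' : ℝ → H) (t : ℝ) :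
    dinavdEnergy α β l Φ z x x' t - dinavdEnergy α β m Φ z x x' t =
      (l - m) * (t * (⟪x t - z, x' t⟫ + β * ⟪∇ Φ (x t), x t - z⟫)
        + (α - 1) / 2 * ‖x t - z‖ ^ 2 - β * (t * (Φ (x t) - Φ z))) := by
  simp only [dinavdEnergy, dinavdMomentum, norm_add_sq_real, inner_add_right, norm_smul,
    real_inner_smul_left, real_inner_smul_right, real_inner_comm (x t - z) (∇ Φ (x t)), mul_pow,
    Real.norm_eq_abs, sq_abs]
  ring

lemma mul_sub_le_dinavdEnergy {α l : ℝ} (hl : 0 ≤ l) (hlα : l ≤ α - 1) (β : ℝ) (Φ : H → ℝ)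
    (z : H) (x x' : ℝ → H) (t : ℝ) :
    t * (t - β * (l + 2 - α)) * (Φ (x t) - Φ z) ≤ dinavdEnergy α β l Φ z x x' t := by
  have hanchor : 0 ≤ l * (α - l - 1) := mul_nonneg hl (by linarith)
  unfold dinavdEnergy
  rw [add_assoc]
  exact le_add_of_nonneg_right (by positivity)

lemma eventually_dinavdEnergy_nonneg {α l : ℝ} {Φ : H → ℝ} {z : H} (hl : 0 ≤ l)
    (hlα : l ≤ α - 1) (β : ℝ) (hz : ∀ w, Φ z ≤ Φ w) (x x' : ℝ → H) :
    ∀ᶠ t in atTop, 0 ≤ dinavdEnergy α β l Φ z x x' t := by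
  filter_upwards [eventually_ge_atTop 0, eventually_ge_atTop (β * (l + 2 - α))] with t ht htc
  exact (mul_nonneg (mul_nonneg ht (sub_nonneg.2 htc)) (sub_nonneg.2 (hz _))).trans
    (mul_sub_le_dinavdEnergy hl hlα β Φ z x x' t)

namespace IsDINAVDSolution

variable {α β t₀ l t : ℝ} {Φ : H → ℝ} {z : H} {x x' x'' : ℝ → H}

lemma hasDerivAt_dinavdMomentum (hsol : IsDINAVDSolution α β t₀ Φ x x' x'')
    (hgrad : Differentiable ℝ (∇ Φ)) (ht₀ : 0 < t₀) (ht : t₀ ≤ t) (l : ℝ) (z : H) :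
    HasDerivAt (dinavdMomentum β l Φ z x x')
      (-((α - 1 - l) • x' t) - (t - β) • ∇ Φ (x t)) t := by
  obtain ⟨hx, hx', -, hode⟩ := hsol
  have ht_ne : t ≠ 0 := (ht₀.trans_le ht).ne'
  have hgradx : HasDerivAt (fun s => ∇ Φ (x s)) (fderiv ℝ (∇ Φ) (x t) (x' t)) t :=
    (hgrad (x t)).hasFDerivAt.comp_hasDerivAt t (hx t ht)
  have hvel : HasDerivAt (fun s => x' s + β • ∇ Φ (x s)) (-((α / t) • x' t) - ∇ Φ (x t)) t := by
    refine ((hx' t ht).add (hgradx.const_smul β)).congr_deriv ?_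
    rw [← sub_eq_zero, ← hode t ht]
    abel
  refine ((((hx t ht).sub_const z).const_smul l).add ((hasDerivAt_id t).smul hvel)).congr_deriv ?_
  simp only [id, one_smul, smul_add, smul_sub, smul_neg, smul_smul, mul_div_cancel₀ _ ht_ne]
  module

lemma hasDerivAt_dinavdEnergy (hsol : IsDINAVDSolution α β t₀ Φ x x' x'')
    (hΦ : Differentiable ℝ Φ) (hgrad : Differentiable ℝ (∇ Φ)) (ht₀ : 0 < t₀) (ht : t₀ ≤ t)
    (l : ℝ) (z : H) :
    HasDerivAt (dinavdEnergy α β l Φ z x x')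
      ((2 * t - β * (l + 2 - α)) * (Φ (x t) - Φ z) - l * (t - β) * ⟪∇ Φ (x t), x t - z⟫
        - t * (α - 1 - l) * ‖x' t‖ ^ 2 - β * t * (t - β) * ‖∇ Φ (x t)‖ ^ 2) t := by
  have hx := hsol.1 t ht
  have hpotential := ((hasDerivAt_id t).mul ((hasDerivAt_id t).sub_const (β * (l + 2 - α)))).mul
    ((hasDerivAt_comp_of_hasGradientAt_s9 (hΦ (x t)).hasGradientAt hx).sub_const (Φ z))
  have hkinetic := (hsol.hasDerivAt_dinavdMomentum hgrad ht₀ ht l z).norm_sq.const_mul (1 / 2)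
  have hanchor := (hx.sub_const z).norm_sq.const_mul (l * (α - l - 1) / 2)
  refine ((hpotential.add hkinetic).add hanchor).congr_deriv ?_
  simp only [dinavdMomentum, id, Pi.mul_apply, inner_add_left, inner_sub_right, inner_neg_right,
    real_inner_smul_left, real_inner_smul_right, ← real_inner_self_eq_norm_sq,
    real_inner_comm (x' t) (x t - z), real_inner_comm (∇ Φ (x t)) (x t - z),
    real_inner_comm (∇ Φ (x t)) (x' t)]
  ring

lemma eventually_hasDerivAt_dinavdEnergy_le (hsol : IsDINAVDSolution α β t₀ Φ x x' x'')
    (hβ : 0 ≤ β) (ht₀ : 0 < t₀) (hconv : ConvexOn ℝ univ Φ) (hΦ : Differentiable ℝ Φ)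
    (hgrad : Differentiable ℝ (∇ Φ)) (hz : ∀ w, Φ z ≤ Φ w) (hl : 2 < l) (hlα : l ≤ α - 1) :
    ∀ᶠ t in atTop, ∃ d ≤ -⟪∇ Φ (x t), x t - z⟫,
      HasDerivAt (dinavdEnergy α β l Φ z x x') d t := by
  filter_upwards [eventually_ge_atTop t₀, eventually_ge_atTop β,
    eventually_ge_atTop ((β * (α - 2) + 1) / (l - 2))] with t ht htβ htl
  refine ⟨_, ?_, hsol.hasDerivAt_dinavdEnergy hΦ hgrad ht₀ ht l z⟩
  have ht0 : 0 ≤ t := (ht₀.trans_le ht).le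
  have hgap : Φ (x t) - Φ z ≤ ⟪∇ Φ (x t), x t - z⟫ := sub_le_inner_gradient_sub hconv (hΦ _) z
  have hpair : 0 ≤ ⟪∇ Φ (x t), x t - z⟫ := inner_gradient_sub_nonneg hconv (hΦ _) (hz _)
  have hcoeff : 0 ≤ 2 * t - β * (l + 2 - α) := by
    linarith [mul_le_of_le_one_right hβ (show l + 2 - α ≤ 1 by linarith)]
  rw [div_le_iff₀ (by linarith)] at htl
  have hvel : 0 ≤ t * (α - 1 - l) * ‖x' t‖ ^ 2 :=
    mul_nonneg (mul_nonneg ht0 (by linarith)) (sq_nonneg _)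
  have hforce : 0 ≤ β * t * (t - β) * ‖∇ Φ (x t)‖ ^ 2 :=
    mul_nonneg (mul_nonneg (mul_nonneg hβ ht0) (by linarith)) (sq_nonneg _)
  linarith [mul_le_mul_of_nonneg_left hgap hcoeff, mul_le_mul_of_nonneg_right htl hpair]

lemma exists_tendsto_dinavdEnergy (hsol : IsDINAVDSolution α β t₀ Φ x x' x'')
    (hβ : 0 ≤ β) (ht₀ : 0 < t₀) (hconv : ConvexOn ℝ univ Φ) (hΦ : Differentiable ℝ Φ)
    (hgrad : Differentiable ℝ (∇ Φ)) (hz : ∀ w, Φ z ≤ Φ w) (hl : 2 < l) (hlα : l ≤ α - 1) :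
    ∃ a, Tendsto (dinavdEnergy α β l Φ z x x') atTop (𝓝 a) := by
  refine exists_tendsto_of_hasDerivAt_nonpos ?_
    (eventually_dinavdEnergy_nonneg (by linarith) hlα β hz x x')
  filter_upwards [hsol.eventually_hasDerivAt_dinavdEnergy_le hβ ht₀ hconv hΦ hgrad hz hl hlα]
    with t ⟨d, hle, hd⟩
  exact ⟨d, hle.trans (neg_nonpos.2 (inner_gradient_sub_nonneg hconv (hΦ _) (hz _))), hd⟩

lemma hasDerivAt_integral_inner_gradient (hsol : IsDINAVDSolution α β t₀ Φ x x' x'')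
    (hgrad : Continuous (∇ Φ)) (z : H) (ht : t₀ < t) :
    HasDerivAt (fun s => ∫ r in t₀..s, ⟪∇ Φ (x r), x r - z⟫) ⟪∇ Φ (x t), x t - z⟫ t := by
  have hx : ContinuousOn x (Ici t₀) := fun s hs => (hsol.1 s hs).continuousAt.continuousWithinAt
  exact hasDerivAt_integral_of_continuousOn_Ici
    ((hgrad.comp_continuousOn hx).inner (hx.sub continuousOn_const)) ht

lemma exists_tendsto_integral_inner_gradient (hsol : IsDINAVDSolution α β t₀ Φ x x' x'')
    (hα : 3 < α) (hβ : 0 ≤ β) (ht₀ : 0 < t₀) (hconv : ConvexOn ℝ univ Φ)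
    (hΦ : Differentiable ℝ Φ) (hgrad : Differentiable ℝ (∇ Φ)) (hz : ∀ w, Φ z ≤ Φ w) :
    ∃ a, Tendsto (fun t => ∫ s in t₀..t, ⟪∇ Φ (x s), x s - z⟫) atTop (𝓝 a) := by
  have hl : 2 < α - 1 := by linarith
  obtain ⟨a, ha⟩ := hsol.exists_tendsto_dinavdEnergy hβ ht₀ hconv hΦ hgrad hz hl le_rfl
  obtain ⟨b, hb⟩ : ∃ b, Tendsto (fun t => dinavdEnergy α β (α - 1) Φ z x x' t +
      ∫ s in t₀..t, ⟪∇ Φ (x s), x s - z⟫) atTop (𝓝 b) := by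
    refine exists_tendsto_of_hasDerivAt_nonpos (b := 0) ?_ ?_
    · filter_upwards [eventually_gt_atTop t₀,
        hsol.eventually_hasDerivAt_dinavdEnergy_le hβ ht₀ hconv hΦ hgrad hz hl le_rfl]
        with t ht ⟨d, hle, hd⟩
      exact ⟨_, by linarith, hd.add (hsol.hasDerivAt_integral_inner_gradient hgrad.continuous z ht)⟩
    · filter_upwards [eventually_ge_atTop t₀,
        eventually_dinavdEnergy_nonneg (two_pos.trans hl).le le_rfl β hz x x'] with t ht hE
      exact add_nonneg hE (intervalIntegral.integral_nonneg ht fun s _ =>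
        inner_gradient_sub_nonneg hconv (hΦ _) (hz _))
  exact ⟨b - a, (hb.sub ha).congr fun t => add_sub_cancel_left _ _⟩

lemma tendsto_mul_sub (hsol : IsDINAVDSolution α β t₀ Φ x x' x'')
    (hα : 3 < α) (hβ : 0 ≤ β) (ht₀ : 0 < t₀) (hconv : ConvexOn ℝ univ Φ)
    (hΦ : Differentiable ℝ Φ) (hgrad : Differentiable ℝ (∇ Φ)) (hz : ∀ w, Φ z ≤ Φ w) :
    Tendsto (fun t => t * (Φ (x t) - Φ z)) atTop (𝓝 0) := by
  have hl : 2 < α - 1 := by linarith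
  obtain ⟨a, ha⟩ := hsol.exists_tendsto_dinavdEnergy hβ ht₀ hconv hΦ hgrad hz hl le_rfl
  have hupper : Tendsto (fun t => dinavdEnergy α β (α - 1) Φ z x x' t /
      (t - β * (α - 1 + 2 - α))) atTop (𝓝 0) :=
    ha.div_atTop (tendsto_atTop_add_const_right _ _ tendsto_id)
  refine tendsto_of_tendsto_of_tendsto_of_le_of_le' tendsto_const_nhds hupper ?_ ?_
  · filter_upwards [eventually_ge_atTop 0] with t ht
    exact mul_nonneg ht (sub_nonneg.2 (hz _))
  · filter_upwards [eventually_gt_atTop (β * (α - 1 + 2 - α))] with t ht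
    rw [le_div_iff₀ (sub_pos.2 ht), mul_right_comm]
    exact mul_sub_le_dinavdEnergy (two_pos.trans hl).le le_rfl β Φ z x x' t

lemma tendsto_potential (hsol : IsDINAVDSolution α β t₀ Φ x x' x'')
    (hα : 3 < α) (hβ : 0 ≤ β) (ht₀ : 0 < t₀) (hconv : ConvexOn ℝ univ Φ)
    (hΦ : Differentiable ℝ Φ) (hgrad : Differentiable ℝ (∇ Φ)) (hz : ∀ w, Φ z ≤ Φ w) :
    Tendsto (fun t => Φ (x t)) atTop (𝓝 (Φ z)) := by
  have h := (hsol.tendsto_mul_sub hα hβ ht₀ hconv hΦ hgrad hz).div_atTop tendsto_id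
  refine tendsto_sub_nhds_zero_iff.1 (h.congr' ?_)
  filter_upwards [eventually_ne_atTop 0] with t ht
  exact mul_div_cancel_left₀ _ ht

lemma exists_tendsto_mul_add_norm_sub_sq (hsol : IsDINAVDSolution α β t₀ Φ x x' x'')
    (hα : 3 < α) (hβ : 0 ≤ β) (ht₀ : 0 < t₀) (hconv : ConvexOn ℝ univ Φ)
    (hΦ : Differentiable ℝ Φ) (hgrad : Differentiable ℝ (∇ Φ)) (hz : ∀ w, Φ z ≤ Φ w) :
    ∃ a, Tendsto (fun t => t * (⟪x t - z, x' t⟫ + β * ⟪∇ Φ (x t), x t - z⟫)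
      + (α - 1) / 2 * ‖x t - z‖ ^ 2) atTop (𝓝 a) := by
  obtain ⟨l, hl, hlα⟩ : ∃ l, 2 < l ∧ l < α - 1 := exists_between (by linarith)
  obtain ⟨a, ha⟩ := hsol.exists_tendsto_dinavdEnergy hβ ht₀ hconv hΦ hgrad hz (hl.trans hlα) le_rfl
  obtain ⟨b, hb⟩ := hsol.exists_tendsto_dinavdEnergy hβ ht₀ hconv hΦ hgrad hz hl hlα.le
  have hgap := hsol.tendsto_mul_sub hα hβ ht₀ hconv hΦ hgrad hz
  refine ⟨_, (((ha.sub hb).div_const (α - 1 - l)).add (hgap.const_mul β)).congr fun t => ?_⟩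
  rw [dinavdEnergy_sub_dinavdEnergy, mul_div_cancel_left₀ _ (sub_pos.2 hlα).ne', sub_add_cancel]

lemma exists_tendsto_norm_sub (hsol : IsDINAVDSolution α β t₀ Φ x x' x'')
    (hα : 3 < α) (hβ : 0 ≤ β) (ht₀ : 0 < t₀) (hconv : ConvexOn ℝ univ Φ)
    (hΦ : Differentiable ℝ Φ) (hgrad : Differentiable ℝ (∇ Φ)) (hz : ∀ w, Φ z ≤ Φ w) :
    ∃ a, Tendsto (fun t => ‖x t - z‖) atTop (𝓝 a) := by
  obtain ⟨a, ha⟩ := hsol.exists_tendsto_mul_add_norm_sub_sq hα hβ ht₀ hconv hΦ hgrad hz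
  obtain ⟨b, hb⟩ := hsol.exists_tendsto_integral_inner_gradient hα hβ ht₀ hconv hΦ hgrad hz
  set I : ℝ → ℝ := fun t => ∫ s in t₀..t, ⟪∇ Φ (x s), x s - z⟫
  have hderiv : ∀ᶠ t in atTop, HasDerivAt (fun t => ‖x t - z‖ ^ 2 / 2 + β * I t)
      (⟪x t - z, x' t⟫ + β * ⟪∇ Φ (x t), x t - z⟫) t := by
    filter_upwards [eventually_gt_atTop t₀] with t ht
    refine ((((hsol.1 t ht.le).sub_const z).norm_sq.div_const 2).add
      ((hsol.hasDerivAt_integral_inner_gradient hgrad.continuous z ht).const_mul β)).congr_deriv ?_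
    rw [mul_div_cancel_left₀ _ two_ne_zero]
  have hq : Tendsto (fun t => ‖x t - z‖ ^ 2 / 2 + β * I t) atTop
      (𝓝 ((a + (α - 1) * (β * b)) / (α - 1))) := by
    refine tendsto_of_tendsto_mul_hasDerivAt_add (by linarith) hderiv
      ((ha.add ((hb.const_mul β).const_mul (α - 1))).congr fun t => ?_)
    ring
  refine ⟨_, ((hq.sub (hb.const_mul β)).const_mul 2).sqrt.congr fun t => ?_⟩
  rw [add_sub_cancel_right, mul_div_cancel₀ _ two_ne_zero, Real.sqrt_sq (norm_nonneg _)]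

end IsDINAVDSolution

theorem stmt9_general (α β t₀ : ℝ) (hα : 3 < α) (hβ : 0 ≤ β) (ht₀ : 0 < t₀)
    (Φ : H → ℝ) (hconv : ConvexOn ℝ Set.univ Φ) (hΦ : Differentiable ℝ Φ)
    (hgrad : Differentiable ℝ (∇ Φ)) (hne : ∃ z : H, ∀ w, Φ z ≤ Φ w)
    (x x' x'' : ℝ → H) (hsol : IsDINAVDSolution α β t₀ Φ x x' x'') :
    ∃ xinf : H, (∀ w, Φ xinf ≤ Φ w) ∧
      ∀ y : H, Tendsto (fun t => ⟪x t, y⟫) atTop (𝓝 ⟪xinf, y⟫) := by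
  refine opial_exists_tendsto_inner (S := {p | ∀ w, Φ p ≤ Φ w}) hne
    (fun p hp => hsol.exists_tendsto_norm_sub hα hβ ht₀ hconv hΦ hgrad hp)
    fun U p hU hp w => ?_
  obtain ⟨z, hz⟩ := hne
  have hpotential := hsol.tendsto_potential hα hβ ht₀ hconv hΦ hgrad hz
  exact (le_of_convexOn_of_tendsto_inner hconv (hΦ p) hp (hpotential.mono_left hU)).trans (hz w)

theorem stmt9 (α β t₀ : ℝ) (hα : 3 < α) (hβ : 0 < β) (ht₀ : 0 < t₀)
    (Φ : H → ℝ) (hconv : ConvexOn ℝ Set.univ Φ) (hΦ : ContDiff ℝ 2 Φ)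
    (hne : ∃ z : H, ∀ w, Φ z ≤ Φ w)
    (x x' x'' : ℝ → H) (hsol : IsDINAVDSolution α β t₀ Φ x x' x'') :
    ∃ xinf : H, (∀ w, Φ xinf ≤ Φ w) ∧
      ∀ y : H, Tendsto (fun t => ⟪x t, y⟫) atTop (𝓝 ⟪xinf, y⟫) :=
  stmt9_general α β t₀ hα hβ.le ht₀ Φ hconv (hΦ.differentiable two_ne_zero)
    (differentiable_gradient_of_contDiff_s9 hΦ) hne x x' x'' hsol
end

section
/- Let α > 3, β > 0, t₀ > 0, let Φ : H → ℝ be convex, twice continuously differentiable and even (Φ(−z) = Φ(z) for all z ∈ H), and let x : [t₀, ∞) → H be a solution of (DIN-AVD). Then there exists x* ∈ argmin Φ such that x(t) converges strongly to x* as t → ∞, i.e., ‖x(t) − x*‖ → 0. -/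
open Filter MeasureTheory Set
open scoped Topology RealInnerProductSpace

variable {H : Type*} [NormedAddCommGroup H] [InnerProductSpace ℝ H] [CompleteSpace H]

/-!
With `p = ẋ + β∇Φ(x)`, (DIN-AVD) becomes the first-order system `ẋ = p - β∇Φ(x)`,
`ṗ = -(α/t)ẋ - ∇Φ(x)`, so the Hessian disappears. Let `z` be a minimizer of `Φ`. For
`2 < λ < α - 1` the energy
`t(t + (α - 2 - λ)β)(Φ(x) - Φ(z)) + ‖tp + λ(x - z)‖²/2 + λ(α - 1 - λ)/2 ‖x - z‖²`
is eventually decreasing, at a rate of at least a multiple of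
`t(Φ(x) - Φ(z) + ‖ẋ‖² + βt‖∇Φ(x)‖²)`. The energy is affine in `λ`; comparing its limits for two
values of `λ`, and using that `1/t` is not integrable at infinity, one gets `Φ(x) → Φ(z)`,
`t‖p‖ → 0` and the convergence of `‖x - z‖`.

If `Φ` is even, then `z = 0` is a minimizer and
`⟨∇Φ(x(t)), x(t) + x(s)⟩ ≥ Φ(x(t)) - Φ(-x(s)) = Φ(x(t)) - Φ(x(s))`. For `t ≤ s` this is at least
`-‖p(t)‖²/2`, because `Φ(x) + ‖p‖²/2` eventually decreases. Hence
`t⟨x + x(s), p⟩ + (α - 1)/2 ‖x + x(s)‖²` plus a multiple of the energy decreases on `[T, s]`, and by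
the parallelogram law this bounds `‖x(t) - x(s)‖²` by a Cauchy quantity.
-/

open scoped Gradient

section RealFunctions

theorem antitoneOn_of_hasDerivAt_nonpos {F F' : ℝ → ℝ} {S : Set ℝ} (hS : Convex ℝ S)
    (hF : ∀ t ∈ S, HasDerivAt F (F' t) t) (hF' : ∀ t ∈ S, F' t ≤ 0) : AntitoneOn F S :=
  antitoneOn_of_hasDerivWithinAt_nonpos hS
    (fun t ht => (hF t ht).continuousAt.continuousWithinAt)
    (fun t ht => (hF t (interior_subset ht)).hasDerivWithinAt)
    (fun t ht => hF' t (interior_subset ht))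

theorem exists_antitoneOn_Ici_of_deriv_nonpos {F : ℝ → ℝ}
    (hF : ∀ᶠ t in atTop, DifferentiableAt ℝ F t ∧ deriv F t ≤ 0) :
    ∃ T, AntitoneOn F (Ici T) := by
  obtain ⟨T, hT⟩ := eventually_atTop.1 hF
  exact ⟨T, antitoneOn_of_hasDerivAt_nonpos (convex_Ici T)
    (fun t ht => (hT t ht).1.hasDerivAt) (fun t ht => (hT t ht).2)⟩

theorem exists_tendsto_atTop_of_deriv_nonpos {F : ℝ → ℝ} {m : ℝ}
    (hF : ∀ᶠ t in atTop, DifferentiableAt ℝ F t ∧ deriv F t ≤ 0)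
    (hm : ∀ᶠ t in atTop, m ≤ F t) : ∃ l, Tendsto F atTop (𝓝 l) := by
  obtain ⟨T, hT⟩ := exists_antitoneOn_Ici_of_deriv_nonpos hF
  have hanti : Antitone fun t => F (max T t) := fun a b hab =>
    hT (le_max_left T a) (le_max_left T b) (max_le_max le_rfl hab)
  have heq : (fun t => F (max T t)) =ᶠ[atTop] F := by
    filter_upwards [eventually_ge_atTop T] with t ht
    rw [max_eq_right ht]
  rcases tendsto_atTop_of_antitone hanti with hbot | ⟨l, hl⟩
  · obtain ⟨t, hlt, hge⟩ :=
      (((hbot.congr' heq).eventually (eventually_lt_atBot m)).and hm).exists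
    exact absurd hge hlt.not_ge
  · exact ⟨l, hl.congr' heq⟩

-- Otherwise `E` would decrease at least like a multiple of `log`.
theorem nonpos_of_tendsto_of_deriv_le_neg_div {E Q : ℝ → ℝ} {m l : ℝ}
    (hE : ∀ᶠ t in atTop, DifferentiableAt ℝ E t ∧ deriv E t ≤ -(Q t / t))
    (hm : ∀ᶠ t in atTop, m ≤ E t) (hQ : Tendsto Q atTop (𝓝 l)) : l ≤ 0 := by
  by_contra! hl
  have hderiv : ∀ᶠ t in atTop, DifferentiableAt ℝ (fun t => E t + l / 2 * Real.log t) t ∧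
      deriv (fun t => E t + l / 2 * Real.log t) t ≤ 0 := by
    filter_upwards [hE, hQ.eventually_const_le (half_lt_self hl), eventually_gt_atTop 0]
      with t ⟨hdiff, hle⟩ hQt ht
    have hsum := hdiff.hasDerivAt.add ((Real.hasDerivAt_log ht.ne').const_mul (l / 2))
    refine ⟨hsum.differentiableAt, ?_⟩
    have hdiv : l / 2 * t⁻¹ ≤ Q t / t := by
      rw [div_eq_mul_inv (Q t)]
      gcongr
    rw [show deriv (fun t => E t + l / 2 * Real.log t) t = _ from hsum.deriv]
    linarith
  obtain ⟨T, hT⟩ := exists_antitoneOn_Ici_of_deriv_nonpos hderiv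
  have htop : Tendsto (fun t => E t + l / 2 * Real.log t) atTop atTop :=
    tendsto_atTop_add_left_of_le' _ m hm
      (Real.tendsto_log_atTop.const_mul_atTop (half_pos hl))
  obtain ⟨t, hgt, ht⟩ :=
    ((htop.eventually_gt_atTop (E T + l / 2 * Real.log T)).and (eventually_ge_atTop T)).exists
  exact absurd (hT self_mem_Ici ht ht) hgt.not_ge

theorem exists_tendsto_of_tendsto_add_mul {ι : Type*} {F : Filter ι} {u w : ι → ℝ} {a b k l : ℝ}
    (hab : a ≠ b) (ha : Tendsto (fun i => u i + a * w i) F (𝓝 k))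
    (hb : Tendsto (fun i => u i + b * w i) F (𝓝 l)) :
    (∃ c, Tendsto u F (𝓝 c)) ∧ ∃ d, Tendsto w F (𝓝 d) := by
  have hw : Tendsto w F (𝓝 ((k - l) / (a - b))) := by
    refine ((ha.sub hb).div_const (a - b)).congr fun i => ?_
    rw [div_eq_iff (sub_ne_zero.2 hab)]
    ring
  exact ⟨⟨_, (ha.sub (hw.const_mul a)).congr fun i => by ring⟩, _, hw⟩

theorem exists_tendsto_of_dist_sq_le {X : Type*} [PseudoMetricSpace X] [CompleteSpace X]
    {x : ℝ → X} {U W : ℝ → ℝ} {T l : ℝ}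
    (hdist : ∀ t s, T ≤ t → t ≤ s → dist (x t) (x s) ^ 2 ≤ U t - W s)
    (hU : Tendsto U atTop (𝓝 l)) (hW : Tendsto W atTop (𝓝 l)) :
    ∃ y, Tendsto x atTop (𝓝 y) := by
  refine cauchySeq_tendsto_of_complete (Metric.cauchySeq_iff.2 fun ε hε => ?_)
  have hε2 : 0 < ε ^ 2 / 2 := by positivity
  obtain ⟨S, hS⟩ := eventually_atTop.1 ((hU.eventually_lt_const (lt_add_of_pos_right l hε2)).and
    ((hW.eventually_const_lt (sub_lt_self l hε2)).and (eventually_ge_atTop T)))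
  have hlt : ∀ t s, S ≤ t → t ≤ s → dist (x t) (x s) < ε := fun t s ht hts => by
    obtain ⟨hUt, -, hTt⟩ := hS t ht
    obtain ⟨-, hWs, -⟩ := hS s (ht.trans hts)
    have hsq : dist (x t) (x s) ^ 2 < ε ^ 2 := by linarith [hdist t s hTt hts]
    exact lt_of_pow_lt_pow_left₀ 2 hε.le hsq
  refine ⟨S, fun t ht s hs => ?_⟩
  rcases le_total t s with hts | hst
  · exact hlt t s ht hts
  · rw [dist_comm]
    exact hlt s t hs hst

end RealFunctions

section Convexity

theorem apply_zero_le_of_convexOn_of_even {E : Type*} [AddCommGroup E] [Module ℝ E] {Φ : E → ℝ}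
    (hconv : ConvexOn ℝ univ Φ) (heven : ∀ w, Φ (-w) = Φ w) (w : E) : Φ 0 ≤ Φ w := by
  have hmid := hconv.2 (mem_univ w) (mem_univ (-w)) (by norm_num : (0 : ℝ) ≤ 1 / 2)
    (by norm_num : (0 : ℝ) ≤ 1 / 2) (by norm_num)
  rw [smul_neg, add_neg_cancel, heven, smul_eq_mul] at hmid
  linarith

variable {Φ : H → ℝ}

theorem hasDerivAt_comp_inner_gradient {y : ℝ → H} {y' : H} {t : ℝ}
    (hΦ : DifferentiableAt ℝ Φ (y t)) (hy : HasDerivAt y y' t) :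
    HasDerivAt (fun s => Φ (y s)) ⟪∇ Φ (y t), y'⟫ t := by
  rw [inner_gradient_left]
  exact hΦ.hasFDerivAt.comp_hasDerivAt t hy

theorem sub_le_inner_gradient_of_convexOn_s11 (hconv : ConvexOn ℝ univ Φ) {y : H}
    (hΦ : DifferentiableAt ℝ Φ y) (w : H) : Φ y - Φ w ≤ ⟪∇ Φ y, y - w⟫ := by
  let line : ℝ →ᵃ[ℝ] H := AffineMap.lineMap y w
  have hconv_line : ConvexOn ℝ univ (Φ ∘ line) := hconv.comp_affineMap line
  have hderiv : HasDerivAt (Φ ∘ line) ⟪∇ Φ y, w - y⟫ 0 := by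
    have hline0 : line 0 = y := AffineMap.lineMap_apply_zero y w
    have hcomp := hasDerivAt_comp_inner_gradient (Φ := Φ) (y := line) (t := 0)
      (by rwa [hline0]) AffineMap.hasDerivAt_lineMap
    rwa [hline0] at hcomp
  have hslope := hconv_line.le_slope_of_hasDerivAt (mem_univ 0) (mem_univ 1) one_pos hderiv
  simp only [slope_def_field, Function.comp_apply, line, AffineMap.lineMap_apply_zero,
    AffineMap.lineMap_apply_one, sub_zero, div_one] at hslope
  rw [← neg_sub w y, inner_neg_right]
  linarith

end Convexity

section Energies

variable {E : Type*} [NormedAddCommGroup E] [InnerProductSpace ℝ E]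

/-- A functional anchored at `z`: for a minimizer `z` it enters the Lyapunov function, and for
`z = -x(s)` it controls `‖x(t) - x(s)‖`. -/
noncomputable def anchor (α : ℝ) (z : E) (x p : ℝ → E) (t : ℝ) : ℝ :=
  t * ⟪x t - z, p t⟫ + (α - 1) / 2 * ‖x t - z‖ ^ 2

/-- The mechanical energy rescaled by `t²`; the weight `t(t + (α - 2)β)` instead of `t²` makes the
cross terms `⟨∇Φ(x), v⟩` cancel in its derivative. -/
noncomputable def scaledEnergy (α β : ℝ) (Φ : E → ℝ) (z : E) (x p : ℝ → E) (t : ℝ) : ℝ :=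
  t * (t + (α - 2) * β) * (Φ (x t) - Φ z) + t ^ 2 / 2 * ‖p t‖ ^ 2

/-- The Lyapunov function with parameter `lam`, in a form that displays it as affine in `lam`;
`lyapunov_eq` gives the usual sum-of-squares form. -/
noncomputable def lyapunov (α β lam : ℝ) (Φ : E → ℝ) (z : E) (x p : ℝ → E) (t : ℝ) : ℝ :=
  scaledEnergy α β Φ z x p t + lam * (anchor α z x p t - β * t * (Φ (x t) - Φ z))

variable {α β lam t : ℝ} {Φ : E → ℝ} {x p : ℝ → E} {z : E}

theorem anchor_neg (y : E) :
    anchor α (-y) x p t = t * ⟪x t + y, p t⟫ + (α - 1) * (‖x t‖ ^ 2 + ‖y‖ ^ 2)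
      - (α - 1) / 2 * ‖x t - y‖ ^ 2 := by
  rw [anchor, sub_neg_eq_add]
  linear_combination (α - 1) / 2 * parallelogram_law_with_norm ℝ (x t) y

theorem abs_mul_inner_add_le {b : ℝ} {y : E} (ht : 0 ≤ t) (hx : ‖x t‖ ≤ b) (hy : ‖y‖ ≤ b) :
    |t * ⟪x t + y, p t⟫| ≤ 2 * b * (t * ‖p t‖) := by
  have hsum : ‖x t + y‖ ≤ 2 * b := (norm_add_le _ _).trans (by linarith)
  calc |t * ⟪x t + y, p t⟫| = t * |⟪x t + y, p t⟫| := by rw [abs_mul, abs_of_nonneg ht]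
    _ ≤ t * (2 * b * ‖p t‖) := by
      gcongr
      exact (abs_real_inner_le_norm _ _).trans (by gcongr)
    _ = 2 * b * (t * ‖p t‖) := by ring

theorem norm_sub_sq_le_of_antitoneOn_anchor_neg_add {G : ℝ → ℝ} {T b s : ℝ}
    (hanti : AntitoneOn (fun r => anchor α (-x s) x p r + G r) (Icc T s))
    (hTt : T ≤ t) (hts : t ≤ s) (ht : 0 ≤ t) (hbt : ‖x t‖ ≤ b) (hbs : ‖x s‖ ≤ b) :
    (α - 1) / 2 * ‖x t - x s‖ ^ 2
      ≤ ((α - 1) * ‖x t‖ ^ 2 + G t + 2 * b * (t * ‖p t‖))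
        - ((α - 1) * ‖x s‖ ^ 2 + G s - 2 * b * (s * ‖p s‖)) := by
  have hle : anchor α (-x s) x p s + G s ≤ anchor α (-x s) x p t + G t :=
    hanti ⟨hTt, hts⟩ ⟨hTt.trans hts, le_rfl⟩ hts
  have hinner_t := abs_le.1 (abs_mul_inner_add_le (p := p) ht hbt hbs)
  have hinner_s := abs_le.1 (abs_mul_inner_add_le (p := p) (ht.trans hts) hbs hbs)
  rw [anchor_neg, anchor_neg, sub_self, norm_zero] at hle
  linarith

theorem lyapunov_eq :
    lyapunov α β lam Φ z x p t = t * (t + (α - 2 - lam) * β) * (Φ (x t) - Φ z)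
      + ‖t • p t + lam • (x t - z)‖ ^ 2 / 2 + lam * (α - 1 - lam) / 2 * ‖x t - z‖ ^ 2 := by
  simp only [lyapunov, scaledEnergy, anchor, norm_add_sq_real, norm_smul, mul_pow,
    Real.norm_eq_abs, sq_abs, real_inner_smul_left, real_inner_smul_right,
    real_inner_comm (x t - z) (p t)]
  ring

theorem mul_norm_sq_le_lyapunov (hβ : 0 ≤ β) (ht : β ≤ t) (hlam : lam ≤ α - 1)
    (hz : Φ z ≤ Φ (x t)) :
    lam * (α - 1 - lam) / 2 * ‖x t - z‖ ^ 2 ≤ lyapunov α β lam Φ z x p t := by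
  have hweight : 0 ≤ t + (α - 2 - lam) * β := by nlinarith
  have hgap : 0 ≤ t * (t + (α - 2 - lam) * β) * (Φ (x t) - Φ z) :=
    mul_nonneg (mul_nonneg (hβ.trans ht) hweight) (sub_nonneg.2 hz)
  rw [lyapunov_eq]
  linarith [sq_nonneg ‖t • p t + lam • (x t - z)‖]

theorem eventually_lyapunov_nonneg (hβ : 0 ≤ β) (hlam : 0 ≤ lam) (hlam' : lam ≤ α - 1)
    (hz : ∀ w, Φ z ≤ Φ w) : ∀ᶠ t in atTop, 0 ≤ lyapunov α β lam Φ z x p t := by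
  filter_upwards [eventually_ge_atTop β] with t ht
  refine le_trans ?_ (mul_norm_sq_le_lyapunov hβ ht hlam' (hz (x t)))
  have := sub_nonneg.2 hlam'
  positivity

theorem mul_inner_neg_div_smul_sub (ht : t ≠ 0) (w a b : E) :
    t * ⟪w, -(α / t) • a - b⟫ = -α * ⟪w, a⟫ - t * ⟪w, b⟫ := by
  rw [inner_sub_right, real_inner_smul_right]
  field_simp

end Energies

section FirstOrderSystem

/-- The first-order form of (DIN-AVD) at time `t`, for the position `x`, its velocity `v` and the
momentum `p = v + β∇Φ(x)`. It involves no second derivative of `Φ`. -/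
structure FirstOrderDINAVDAt (α β : ℝ) (Φ : H → ℝ) (x v p : ℝ → H) (t : ℝ) : Prop where
  hasDerivAt_position : HasDerivAt x (v t) t
  momentum_eq : p t = v t + β • ∇ Φ (x t)
  hasDerivAt_momentum : HasDerivAt p (-(α / t) • v t - ∇ Φ (x t)) t

theorem IsDINAVDSolution.eventually_firstOrderDINAVDAt {α β t₀ : ℝ} {Φ : H → ℝ} {x x' x'' : ℝ → H}
    (hsol : IsDINAVDSolution α β t₀ Φ x x' x'') (hΦ : Differentiable ℝ (∇ Φ)) :
    ∀ᶠ t in atTop, FirstOrderDINAVDAt α β Φ x x' (fun s => x' s + β • ∇ Φ (x s)) t := by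
  obtain ⟨hx, hx', -, hode⟩ := hsol
  filter_upwards [eventually_ge_atTop t₀] with t ht
  have hgrad : HasDerivAt (fun s => ∇ Φ (x s)) (fderiv ℝ (∇ Φ) (x t) (x' t)) t :=
    (hΦ (x t)).hasFDerivAt.comp_hasDerivAt t (hx t ht)
  refine ⟨hx t ht, rfl, ((hx' t ht).add (hgrad.const_smul β)).congr_deriv ?_⟩
  rw [neg_smul, ← sub_eq_zero, ← hode t ht]
  abel

/-- The quantity `D` such that `tD(t)` bounds, up to a constant, the decay rate of the Lyapunov
function from below. -/
noncomputable def dissipation (β : ℝ) (Φ : H → ℝ) (z : H) (x v : ℝ → H) (t : ℝ) : ℝ :=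
  Φ (x t) - Φ z + ‖v t‖ ^ 2 + β * t * ‖∇ Φ (x t)‖ ^ 2

variable {α β lam t : ℝ} {Φ : H → ℝ} {x v p : ℝ → H} {z : H}

namespace FirstOrderDINAVDAt

theorem norm_momentum_sq (h : FirstOrderDINAVDAt α β Φ x v p t) :
    ‖p t‖ ^ 2 = ‖v t‖ ^ 2 + 2 * β * ⟪∇ Φ (x t), v t⟫ + β ^ 2 * ‖∇ Φ (x t)‖ ^ 2 := by
  rw [h.momentum_eq, norm_add_sq_real, real_inner_smul_right, norm_smul, mul_pow, Real.norm_eq_abs,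
    sq_abs, real_inner_comm]
  ring

theorem norm_momentum_sq_le (h : FirstOrderDINAVDAt α β Φ x v p t) :
    ‖p t‖ ^ 2 ≤ 2 * ‖v t‖ ^ 2 + 2 * β ^ 2 * ‖∇ Φ (x t)‖ ^ 2 := by
  have hpar := parallelogram_law_with_norm ℝ (v t) (β • ∇ Φ (x t))
  rw [← h.momentum_eq, norm_smul, mul_pow, Real.norm_eq_abs, sq_abs] at hpar
  linarith [sq_nonneg ‖v t - β • ∇ Φ (x t)‖]

theorem hasDerivAt_anchor (h : FirstOrderDINAVDAt α β Φ x v p t) (ht : t ≠ 0) (z : H) :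
    HasDerivAt (anchor α z x p)
      (t * ‖v t‖ ^ 2 + t * β * ⟪∇ Φ (x t), v t⟫ - (t - β) * ⟪∇ Φ (x t), x t - z⟫) t := by
  have hxz : HasDerivAt (fun s => x s - z) (v t) t := h.hasDerivAt_position.sub_const z
  refine (((hasDerivAt_id t).mul (hxz.inner ℝ h.hasDerivAt_momentum)).add
    (hxz.norm_sq.const_mul ((α - 1) / 2))).congr_deriv ?_
  have hmom := mul_inner_neg_div_smul_sub (α := α) ht (x t - z) (v t) (∇ Φ (x t))
  simp only [h.momentum_eq, inner_add_right, real_inner_smul_right, real_inner_self_eq_norm_sq,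
    real_inner_comm (∇ Φ (x t)), id] at hmom ⊢
  linear_combination hmom

theorem hasDerivAt_scaledEnergy (h : FirstOrderDINAVDAt α β Φ x v p t) (ht : t ≠ 0)
    (hΦ : DifferentiableAt ℝ Φ (x t)) :
    HasDerivAt (scaledEnergy α β Φ z x p)
      ((2 * t + (α - 2) * β) * (Φ (x t) - Φ z) - (α - 1) * t * ‖v t‖ ^ 2
        - β * t * (t - β) * ‖∇ Φ (x t)‖ ^ 2) t := by
  have hgap := (hasDerivAt_comp_inner_gradient hΦ h.hasDerivAt_position).sub_const (Φ z)
  have hid := hasDerivAt_id t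
  refine (((hid.mul (hid.add_const ((α - 2) * β))).mul hgap).add
    (((hid.pow 2).div_const 2).mul h.hasDerivAt_momentum.norm_sq)).congr_deriv ?_
  have hmom := mul_inner_neg_div_smul_sub (α := α) ht (p t) (v t) (∇ Φ (x t))
  simp only [h.norm_momentum_sq, Pi.mul_apply, Pi.pow_apply, id]
  simp only [h.momentum_eq, inner_add_left, real_inner_smul_left, real_inner_self_eq_norm_sq,
    real_inner_comm (∇ Φ (x t)) (v t)] at hmom ⊢
  linear_combination t * hmom

theorem hasDerivAt_lyapunov (h : FirstOrderDINAVDAt α β Φ x v p t) (ht : t ≠ 0)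
    (hΦ : DifferentiableAt ℝ Φ (x t)) :
    HasDerivAt (lyapunov α β lam Φ z x p)
      ((2 * t + (α - 2 - lam) * β) * (Φ (x t) - Φ z) - (α - 1 - lam) * t * ‖v t‖ ^ 2
        - β * t * (t - β) * ‖∇ Φ (x t)‖ ^ 2 - lam * (t - β) * ⟪∇ Φ (x t), x t - z⟫) t := by
  have hgap := (hasDerivAt_comp_inner_gradient hΦ h.hasDerivAt_position).sub_const (Φ z)
  refine ((h.hasDerivAt_scaledEnergy ht hΦ).add (((h.hasDerivAt_anchor ht z).sub
    (((hasDerivAt_id t).const_mul β).mul hgap)).const_mul lam)).congr_deriv ?_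
  simp only [id]
  ring

-- Completing the square in `v` absorbs the cross term `-(αβ/t)⟨∇Φ(x), v⟩`.
theorem hasDerivAt_mechanicalEnergy (h : FirstOrderDINAVDAt α β Φ x v p t) (ht : t ≠ 0)
    (hΦ : DifferentiableAt ℝ Φ (x t)) :
    HasDerivAt (fun s => Φ (x s) + ‖p s‖ ^ 2 / 2)
      (-(α / t) * ‖v t + (β / 2) • ∇ Φ (x t)‖ ^ 2
        - β * (1 - α * β / (4 * t)) * ‖∇ Φ (x t)‖ ^ 2) t := by
  refine ((hasDerivAt_comp_inner_gradient hΦ h.hasDerivAt_position).add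
    (h.hasDerivAt_momentum.norm_sq.div_const 2)).congr_deriv ?_
  rw [norm_add_sq_real, norm_smul, mul_pow, Real.norm_eq_abs, sq_abs]
  simp only [h.momentum_eq, inner_add_left, inner_sub_right, real_inner_smul_left,
    real_inner_smul_right, real_inner_self_eq_norm_sq, real_inner_comm (∇ Φ (x t)) (v t)]
  field_simp
  ring

end FirstOrderDINAVDAt

theorem dissipation_nonneg (hβ : 0 ≤ β) (ht : 0 ≤ t) (hz : Φ z ≤ Φ (x t)) :
    0 ≤ dissipation β Φ z x v t := by
  have := sub_nonneg.2 hz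
  unfold dissipation
  positivity

theorem scaledEnergy_le_mul_dissipation (h : FirstOrderDINAVDAt α β Φ x v p t) (hα : 2 ≤ α)
    (hβ : 0 ≤ β) (ht : 1 ≤ t) (hz : Φ z ≤ Φ (x t)) :
    scaledEnergy α β Φ z x p t ≤ (1 + (α - 1) * β) * t ^ 2 * dissipation β Φ z x v t := by
  have ht0 : 0 ≤ t := by linarith
  have hgap : 0 ≤ Φ (x t) - Φ z := sub_nonneg.2 hz
  have hα2 : 0 ≤ α - 2 := by linarith
  have hpotential : t * (t + (α - 2) * β) * (Φ (x t) - Φ z)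
      ≤ (1 + (α - 1) * β) * t ^ 2 * (Φ (x t) - Φ z) := by
    have hweight : t + (α - 2) * β ≤ (1 + (α - 1) * β) * t := by
      nlinarith [mul_nonneg (mul_nonneg hα2 hβ) (sub_nonneg.2 ht), mul_nonneg hβ ht0]
    nlinarith [mul_le_mul_of_nonneg_left hweight (mul_nonneg ht0 hgap)]
  have hmomentum : t ^ 2 / 2 * ‖p t‖ ^ 2
      ≤ (1 + (α - 1) * β) * t ^ 2 * (‖v t‖ ^ 2 + β * t * ‖∇ Φ (x t)‖ ^ 2) := by
    have hC1 : ‖v t‖ ^ 2 ≤ (1 + (α - 1) * β) * ‖v t‖ ^ 2 :=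
      le_mul_of_one_le_left (sq_nonneg _) (by nlinarith)
    have hCβ : β * (β * ‖∇ Φ (x t)‖ ^ 2) ≤ (1 + (α - 1) * β) * (β * t * ‖∇ Φ (x t)‖ ^ 2) := by
      gcongr ?_ * (?_ * _)
      · nlinarith
      · nlinarith
      · exact le_mul_of_one_le_right hβ ht
    nlinarith [h.norm_momentum_sq_le, sq_nonneg t]
  unfold scaledEnergy dissipation
  linarith

theorem deriv_anchor_le_mul_dissipation (h : FirstOrderDINAVDAt α β Φ x v p t) (hβ : 0 ≤ β)
    (ht : 1 ≤ t) (htβ : β ≤ t) (hz : Φ z ≤ Φ (x t)) {w : H}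
    (hw : -(‖p t‖ ^ 2 / 2) ≤ ⟪∇ Φ (x t), x t - w⟫) :
    deriv (anchor α w x p) t ≤ (2 + β) * (t * dissipation β Φ z x v t) := by
  have ht0 : 0 < t := by linarith
  have hcross : t * β * ⟪∇ Φ (x t), v t⟫ ≤ t * β * ((‖∇ Φ (x t)‖ ^ 2 + ‖v t‖ ^ 2) / 2) := by
    gcongr
    linarith [norm_sub_sq_real (∇ Φ (x t)) (v t), sq_nonneg ‖∇ Φ (x t) - v t‖]
  have hinner : -((t - β) * ⟪∇ Φ (x t), x t - w⟫)
      ≤ t * (‖v t‖ ^ 2 + β ^ 2 * ‖∇ Φ (x t)‖ ^ 2) :=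
    calc -((t - β) * ⟪∇ Φ (x t), x t - w⟫) ≤ (t - β) * (‖p t‖ ^ 2 / 2) := by
          nlinarith [mul_le_mul_of_nonneg_left hw (sub_nonneg.2 htβ)]
      _ ≤ t * (‖p t‖ ^ 2 / 2) := by gcongr; linarith
      _ ≤ t * (‖v t‖ ^ 2 + β ^ 2 * ‖∇ Φ (x t)‖ ^ 2) := by
          gcongr
          linarith [h.norm_momentum_sq_le]
  have hgradient : t * ((β / 2 + β ^ 2) * ‖∇ Φ (x t)‖ ^ 2)
      ≤ t * ((2 + β) * (β * t) * ‖∇ Φ (x t)‖ ^ 2) := by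
    gcongr
    nlinarith [mul_nonneg hβ (sub_nonneg.2 ht), mul_nonneg (sq_nonneg β) (sub_nonneg.2 ht)]
  have hgap : 0 ≤ (2 + β) * (t * (Φ (x t) - Φ z)) := by
    have := sub_nonneg.2 hz
    positivity
  have hvelocity : 0 ≤ β * (t * ‖v t‖ ^ 2) := by positivity
  rw [(h.hasDerivAt_anchor ht0.ne' w).deriv, dissipation]
  linarith

end FirstOrderSystem

section Asymptotics

variable {α β lam : ℝ} {Φ : H → ℝ} {x v p : ℝ → H} {z : H}

theorem exists_eventually_deriv_lyapunov_le
    (h : ∀ᶠ t in atTop, FirstOrderDINAVDAt α β Φ x v p t) (hβ : 0 ≤ β)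
    (hlam : 2 < lam) (hlam' : lam < α - 1) (hconv : ConvexOn ℝ univ Φ)
    (hΦ : Differentiable ℝ Φ) (hz : ∀ w, Φ z ≤ Φ w) :
    ∃ c > 0, ∀ᶠ t in atTop, DifferentiableAt ℝ (lyapunov α β lam Φ z x p) t ∧
      deriv (lyapunov α β lam Φ z x p) t ≤ -(c * (t * dissipation β Φ z x v t)) := by
  obtain ⟨c, hc, hcf, hcv, hcg⟩ :
      ∃ c > 0, c ≤ (lam - 2) / 2 ∧ c ≤ α - 1 - lam ∧ c ≤ 1 / 2 :=
    ⟨min ((lam - 2) / 2) (min (α - 1 - lam) (1 / 2)),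
      lt_min (by linarith) (lt_min (by linarith) (by norm_num)), min_le_left _ _,
      (min_le_right _ _).trans (min_le_left _ _), (min_le_right _ _).trans (min_le_right _ _)⟩
  refine ⟨c, hc, ?_⟩
  filter_upwards [h, eventually_gt_atTop 0, eventually_ge_atTop (2 * β),
    eventually_ge_atTop (2 * ((α - 2) * β) / (lam - 2))] with t ht ht0 htβ htlam
  rw [div_le_iff₀ (by linarith)] at htlam
  have hderiv := ht.hasDerivAt_lyapunov (lam := lam) (z := z) ht0.ne' (hΦ (x t))
  refine ⟨hderiv.differentiableAt, ?_⟩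
  rw [hderiv.deriv]
  have hgap : 0 ≤ Φ (x t) - Φ z := sub_nonneg.2 (hz (x t))
  have hinner : lam * (t - β) * (Φ (x t) - Φ z) ≤ lam * (t - β) * ⟪∇ Φ (x t), x t - z⟫ :=
    mul_le_mul_of_nonneg_left (sub_le_inner_gradient_of_convexOn_s11 hconv (hΦ (x t)) z)
      (mul_nonneg (by linarith) (by linarith))
  have hpotential : c * t * (Φ (x t) - Φ z)
      ≤ ((lam - 2) * t - (α - 2) * β) * (Φ (x t) - Φ z) :=
    mul_le_mul_of_nonneg_right (by nlinarith) hgap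
  have hvelocity : c * (t * ‖v t‖ ^ 2) ≤ (α - 1 - lam) * (t * ‖v t‖ ^ 2) :=
    mul_le_mul_of_nonneg_right hcv (by positivity)
  have hgradient : c * t * (β * t * ‖∇ Φ (x t)‖ ^ 2) ≤ (t - β) * (β * t * ‖∇ Φ (x t)‖ ^ 2) :=
    mul_le_mul_of_nonneg_right (by nlinarith) (by positivity)
  unfold dissipation
  linarith

theorem exists_tendsto_lyapunov
    (h : ∀ᶠ t in atTop, FirstOrderDINAVDAt α β Φ x v p t) (hβ : 0 ≤ β)
    (hlam : 2 < lam) (hlam' : lam < α - 1) (hconv : ConvexOn ℝ univ Φ)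
    (hΦ : Differentiable ℝ Φ) (hz : ∀ w, Φ z ≤ Φ w) :
    ∃ l, Tendsto (lyapunov α β lam Φ z x p) atTop (𝓝 l) := by
  obtain ⟨c, hc, hdecay⟩ := exists_eventually_deriv_lyapunov_le h hβ hlam hlam' hconv hΦ hz
  refine exists_tendsto_atTop_of_deriv_nonpos ?_
    (eventually_lyapunov_nonneg hβ (by linarith) hlam'.le hz)
  filter_upwards [hdecay, eventually_ge_atTop 0] with t ⟨hdiff, hle⟩ ht
  have := dissipation_nonneg (v := v) hβ ht (hz (x t))
  exact ⟨hdiff, hle.trans (neg_nonpos.2 (by positivity))⟩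

theorem exists_tendsto_scaledEnergy_and_anchor_sub
    (h : ∀ᶠ t in atTop, FirstOrderDINAVDAt α β Φ x v p t) (hα : 3 < α) (hβ : 0 ≤ β)
    (hconv : ConvexOn ℝ univ Φ) (hΦ : Differentiable ℝ Φ) (hz : ∀ w, Φ z ≤ Φ w) :
    (∃ l, Tendsto (scaledEnergy α β Φ z x p) atTop (𝓝 l)) ∧
      ∃ l, Tendsto (fun t => anchor α z x p t - β * t * (Φ (x t) - Φ z)) atTop (𝓝 l) := by
  obtain ⟨lam₁, hlam₁, hlam₁'⟩ := exists_between (show 2 < α - 1 by linarith)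
  obtain ⟨lam₂, hlam₂, hlam₂'⟩ := exists_between hlam₁'
  obtain ⟨l₁, hl₁⟩ := exists_tendsto_lyapunov h hβ hlam₁ hlam₁' hconv hΦ hz
  obtain ⟨l₂, hl₂⟩ := exists_tendsto_lyapunov h hβ (hlam₁.trans hlam₂) hlam₂' hconv hΦ hz
  exact exists_tendsto_of_tendsto_add_mul hlam₂.ne hl₁ hl₂

theorem tendsto_scaledEnergy_zero
    (h : ∀ᶠ t in atTop, FirstOrderDINAVDAt α β Φ x v p t) (hα : 3 < α) (hβ : 0 ≤ β)
    (hconv : ConvexOn ℝ univ Φ) (hΦ : Differentiable ℝ Φ) (hz : ∀ w, Φ z ≤ Φ w) :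
    Tendsto (scaledEnergy α β Φ z x p) atTop (𝓝 0) := by
  obtain ⟨⟨l, hl⟩, -⟩ := exists_tendsto_scaledEnergy_and_anchor_sub h hα hβ hconv hΦ hz
  obtain ⟨lam, hlam, hlam'⟩ := exists_between (show 2 < α - 1 by linarith)
  obtain ⟨c, hc, hdecay⟩ := exists_eventually_deriv_lyapunov_le h hβ hlam hlam' hconv hΦ hz
  obtain ⟨C, hC⟩ : ∃ C, C = 1 + (α - 1) * β := ⟨_, rfl⟩
  have hC0 : 0 < C := by nlinarith
  have hnonpos : c / C * l ≤ 0 := by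
    refine nonpos_of_tendsto_of_deriv_le_neg_div ?_
      (eventually_lyapunov_nonneg (x := x) (p := p) hβ (by linarith) hlam'.le hz)
      (hl.const_mul (c / C))
    filter_upwards [hdecay, h, eventually_ge_atTop 1] with t ⟨hdiff, hle⟩ ht ht1
    refine ⟨hdiff, hle.trans (neg_le_neg ?_)⟩
    have hbound := scaledEnergy_le_mul_dissipation ht (by linarith) hβ ht1 (hz (x t))
    rw [← hC] at hbound
    calc c / C * scaledEnergy α β Φ z x p t / t
        ≤ c / C * (C * t ^ 2 * dissipation β Φ z x v t) / t := by gcongr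
      _ = c * (t * dissipation β Φ z x v t) := by field_simp
  have hnonneg : 0 ≤ l := by
    refine ge_of_tendsto hl ?_
    filter_upwards [eventually_ge_atTop 0] with t ht
    have := sub_nonneg.2 (hz (x t))
    have : 0 ≤ α - 2 := by linarith
    unfold scaledEnergy
    positivity
  rwa [le_antisymm (nonpos_of_mul_nonpos_right hnonpos (by positivity)) hnonneg] at hl

theorem tendsto_mul_gap_zero
    (h : ∀ᶠ t in atTop, FirstOrderDINAVDAt α β Φ x v p t) (hα : 3 < α) (hβ : 0 ≤ β)
    (hconv : ConvexOn ℝ univ Φ) (hΦ : Differentiable ℝ Φ) (hz : ∀ w, Φ z ≤ Φ w) :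
    Tendsto (fun t => t * (Φ (x t) - Φ z)) atTop (𝓝 0) := by
  refine squeeze_zero' ?_ ?_ (tendsto_scaledEnergy_zero h hα hβ hconv hΦ hz)
  · filter_upwards [eventually_ge_atTop 0] with t ht
    exact mul_nonneg ht (sub_nonneg.2 (hz (x t)))
  · filter_upwards [eventually_ge_atTop 1] with t ht
    have hgap : 0 ≤ t * (Φ (x t) - Φ z) := mul_nonneg (by linarith) (sub_nonneg.2 (hz (x t)))
    have hweight : 1 ≤ t + (α - 2) * β := by nlinarith
    unfold scaledEnergy
    nlinarith [mul_le_mul_of_nonneg_right hweight hgap, mul_nonneg (sq_nonneg t) (sq_nonneg ‖p t‖)]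

theorem tendsto_potential
    (h : ∀ᶠ t in atTop, FirstOrderDINAVDAt α β Φ x v p t) (hα : 3 < α) (hβ : 0 ≤ β)
    (hconv : ConvexOn ℝ univ Φ) (hΦ : Differentiable ℝ Φ) (hz : ∀ w, Φ z ≤ Φ w) :
    Tendsto (fun t => Φ (x t)) atTop (𝓝 (Φ z)) := by
  rw [tendsto_sub_nhds_zero_iff.symm]
  refine squeeze_zero' (.of_forall fun t => sub_nonneg.2 (hz (x t))) ?_
    (tendsto_mul_gap_zero h hα hβ hconv hΦ hz)
  filter_upwards [eventually_ge_atTop 1] with t ht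
  exact le_mul_of_one_le_left (sub_nonneg.2 (hz (x t))) ht

theorem tendsto_mul_norm_momentum_zero
    (h : ∀ᶠ t in atTop, FirstOrderDINAVDAt α β Φ x v p t) (hα : 3 < α) (hβ : 0 ≤ β)
    (hconv : ConvexOn ℝ univ Φ) (hΦ : Differentiable ℝ Φ) (hz : ∀ w, Φ z ≤ Φ w) :
    Tendsto (fun t => t * ‖p t‖) atTop (𝓝 0) := by
  have hsqrt : Tendsto (fun t => √(2 * scaledEnergy α β Φ z x p t)) atTop (𝓝 0) := by
    simpa using ((tendsto_scaledEnergy_zero h hα hβ hconv hΦ hz).const_mul 2).sqrt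
  refine squeeze_zero' ?_ ?_ hsqrt
  · filter_upwards [eventually_ge_atTop 0] with t ht
    positivity
  · filter_upwards [eventually_ge_atTop 0] with t ht
    have hpotential : 0 ≤ t * (t + (α - 2) * β) * (Φ (x t) - Φ z) := by
      have := sub_nonneg.2 (hz (x t))
      have : 0 ≤ α - 2 := by linarith
      positivity
    refine Real.le_sqrt_of_sq_le ?_
    unfold scaledEnergy
    linarith

theorem isBoundedUnder_norm_sub
    (h : ∀ᶠ t in atTop, FirstOrderDINAVDAt α β Φ x v p t) (hα : 3 < α) (hβ : 0 ≤ β)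
    (hconv : ConvexOn ℝ univ Φ) (hΦ : Differentiable ℝ Φ) (hz : ∀ w, Φ z ≤ Φ w) :
    IsBoundedUnder (· ≤ ·) atTop fun t => ‖x t - z‖ := by
  obtain ⟨lam, hlam, hlam'⟩ := exists_between (show 2 < α - 1 by linarith)
  obtain ⟨l, hl⟩ := exists_tendsto_lyapunov h hβ hlam hlam' hconv hΦ hz
  have hcoef : 0 < lam * (α - 1 - lam) / 2 :=
    div_pos (mul_pos (by linarith) (by linarith)) two_pos
  refine isBoundedUnder_of_eventually_le (a := √((l + 1) / (lam * (α - 1 - lam) / 2))) ?_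
  filter_upwards [eventually_ge_atTop β, hl.eventually_le_const (lt_add_one l)] with t htβ hle
  refine Real.le_sqrt_of_sq_le ((le_div_iff₀' hcoef).2 ?_)
  exact (mul_norm_sq_le_lyapunov hβ htβ hlam'.le (hz (x t))).trans hle

theorem exists_tendsto_norm_sub_sq
    (h : ∀ᶠ t in atTop, FirstOrderDINAVDAt α β Φ x v p t) (hα : 3 < α) (hβ : 0 ≤ β)
    (hconv : ConvexOn ℝ univ Φ) (hΦ : Differentiable ℝ Φ) (hz : ∀ w, Φ z ≤ Φ w) :
    ∃ l, Tendsto (fun t => ‖x t - z‖ ^ 2) atTop (𝓝 l) := by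
  obtain ⟨-, l, hl⟩ := exists_tendsto_scaledEnergy_and_anchor_sub h hα hβ hconv hΦ hz
  have hbounded : IsBoundedUnder (· ≤ ·) atTop (norm ∘ fun t => ‖x t - z‖) := by
    simpa only [Function.comp_def, norm_norm] using isBoundedUnder_norm_sub h hα hβ hconv hΦ hz
  have hinner : Tendsto (fun t => t * ⟪x t - z, p t⟫) atTop (𝓝 0) := by
    refine squeeze_zero_norm' ?_ ((tendsto_mul_norm_momentum_zero h hα hβ hconv hΦ hz)
      |>.zero_mul_isBoundedUnder_le hbounded)
    filter_upwards [eventually_ge_atTop 0] with t ht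
    rw [norm_mul, Real.norm_of_nonneg ht, mul_assoc, mul_comm ‖p t‖]
    gcongr
    exact norm_inner_le_norm _ _
  have hgap := (tendsto_mul_gap_zero h hα hβ hconv hΦ hz).const_mul β
  refine ⟨_, (((hl.add hgap).sub hinner).div_const ((α - 1) / 2)).congr fun t => ?_⟩
  rw [div_eq_iff (by linarith), anchor]
  ring

theorem exists_antitoneOn_mechanicalEnergy
    (h : ∀ᶠ t in atTop, FirstOrderDINAVDAt α β Φ x v p t) (hα : 0 ≤ α) (hβ : 0 ≤ β)
    (hΦ : Differentiable ℝ Φ) :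
    ∃ T, AntitoneOn (fun t => Φ (x t) + ‖p t‖ ^ 2 / 2) (Ici T) := by
  refine exists_antitoneOn_Ici_of_deriv_nonpos ?_
  filter_upwards [h, eventually_gt_atTop 0, eventually_ge_atTop (α * β / 4)] with t ht ht0 htαβ
  have hderiv := ht.hasDerivAt_mechanicalEnergy ht0.ne' (hΦ (x t))
  refine ⟨hderiv.differentiableAt, ?_⟩
  have hcoef : 0 ≤ 1 - α * β / (4 * t) :=
    sub_nonneg.2 ((div_le_one (by positivity)).2 (by linarith))
  have hvelocity : 0 ≤ α / t * ‖v t + (β / 2) • ∇ Φ (x t)‖ ^ 2 := by positivity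
  have hgradient : 0 ≤ β * (1 - α * β / (4 * t)) * ‖∇ Φ (x t)‖ ^ 2 := by positivity
  rw [hderiv.deriv]
  linarith

end Asymptotics

section EvenPotential

variable {α β : ℝ} {Φ : H → ℝ} {x v p : ℝ → H}

theorem exists_antitoneOn_anchor_neg_add_lyapunov
    (h : ∀ᶠ t in atTop, FirstOrderDINAVDAt α β Φ x v p t) (hβ : 0 ≤ β) {lam : ℝ}
    (hlam : 2 < lam) (hlam' : lam < α - 1) (hconv : ConvexOn ℝ univ Φ)
    (hΦ : Differentiable ℝ Φ) (heven : ∀ w, Φ (-w) = Φ w) :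
    ∃ K T, ∀ s, AntitoneOn
      (fun t => anchor α (-x s) x p t + K * lyapunov α β lam Φ 0 x p t) (Icc T s) := by
  have hz := apply_zero_le_of_convexOn_of_even hconv heven
  obtain ⟨c, hc, hdecay⟩ := exists_eventually_deriv_lyapunov_le h hβ hlam hlam' hconv hΦ hz
  obtain ⟨S, hmech⟩ := exists_antitoneOn_mechanicalEnergy h (by linarith) hβ hΦ
  obtain ⟨T, hT⟩ := eventually_atTop.1 (h.and (hdecay.and ((eventually_ge_atTop S).and
    ((eventually_ge_atTop 1).and (eventually_ge_atTop β)))))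
  refine ⟨(2 + β) / c, T, fun s => antitoneOn_of_hasDerivAt_nonpos (convex_Icc T s)
    (F' := fun t => deriv (anchor α (-x s) x p) t
      + (2 + β) / c * deriv (lyapunov α β lam Φ 0 x p) t) (fun t ht => ?_) fun t ht => ?_⟩
  · obtain ⟨hsys, ⟨hdiff, -⟩, -, ht1, -⟩ := hT t ht.1
    have hanchor := hsys.hasDerivAt_anchor (by linarith : t ≠ 0) (-x s)
    exact hanchor.differentiableAt.hasDerivAt.add (hdiff.hasDerivAt.const_mul _)
  · obtain ⟨hsys, ⟨-, hle⟩, hSt, ht1, htβ⟩ := hT t ht.1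
    have hinner : -(‖p t‖ ^ 2 / 2) ≤ ⟪∇ Φ (x t), x t - -x s⟫ := by
      have hsub := sub_le_inner_gradient_of_convexOn_s11 hconv (hΦ (x t)) (-x s)
      have henergy : Φ (x s) + ‖p s‖ ^ 2 / 2 ≤ Φ (x t) + ‖p t‖ ^ 2 / 2 :=
        hmech hSt (hSt.trans ht.2) ht.2
      rw [heven] at hsub
      linarith [sq_nonneg ‖p s‖]
    have hanchor := deriv_anchor_le_mul_dissipation hsys hβ ht1 htβ (hz (x t)) hinner
    have hlyapunov : (2 + β) / c * deriv (lyapunov α β lam Φ 0 x p) t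
        ≤ -((2 + β) * (t * dissipation β Φ 0 x v t)) :=
      calc (2 + β) / c * deriv (lyapunov α β lam Φ 0 x p) t
          ≤ (2 + β) / c * -(c * (t * dissipation β Φ 0 x v t)) := by gcongr
        _ = -((2 + β) * (t * dissipation β Φ 0 x v t)) := by field_simp
    linarith

theorem exists_tendsto_position_of_even
    (h : ∀ᶠ t in atTop, FirstOrderDINAVDAt α β Φ x v p t) (hα : 3 < α) (hβ : 0 ≤ β)
    (hconv : ConvexOn ℝ univ Φ) (hΦ : Differentiable ℝ Φ) (heven : ∀ w, Φ (-w) = Φ w) :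
    ∃ y, Tendsto x atTop (𝓝 y) := by
  have hz := apply_zero_le_of_convexOn_of_even hconv heven
  obtain ⟨lam, hlam, hlam'⟩ := exists_between (show 2 < α - 1 by linarith)
  obtain ⟨K, T, hanti⟩ :=
    exists_antitoneOn_anchor_neg_add_lyapunov h hβ hlam hlam' hconv hΦ heven
  obtain ⟨l, hl⟩ := exists_tendsto_lyapunov h hβ hlam hlam' hconv hΦ hz
  obtain ⟨m, hm⟩ := exists_tendsto_norm_sub_sq h hα hβ hconv hΦ hz
  obtain ⟨b, hb⟩ := (isBoundedUnder_norm_sub h hα hβ hconv hΦ hz).eventually_le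
  simp only [sub_zero] at hm hb
  obtain ⟨S, hS⟩ := eventually_atTop.1
    (hb.and ((eventually_ge_atTop T).and (eventually_ge_atTop 0)))
  have hα1 : 0 < (α - 1) / 2 := by linarith
  have hmain : Tendsto (fun t => (α - 1) * ‖x t‖ ^ 2 + K * lyapunov α β lam Φ 0 x p t) atTop
      (𝓝 ((α - 1) * m + K * l)) := (hm.const_mul _).add (hl.const_mul _)
  have herror : Tendsto (fun t => 2 * b * (t * ‖p t‖)) atTop (𝓝 (2 * b * 0)) :=
    (tendsto_mul_norm_momentum_zero h hα hβ hconv hΦ hz).const_mul _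
  rw [mul_zero] at herror
  have hupper := (hmain.add herror).div_const ((α - 1) / 2)
  have hlower := (hmain.sub herror).div_const ((α - 1) / 2)
  rw [add_zero] at hupper
  rw [sub_zero] at hlower
  refine exists_tendsto_of_dist_sq_le (T := S) (fun t s hSt hts => ?_) hupper hlower
  obtain ⟨hbt, hTt, ht⟩ := hS t hSt
  rw [dist_eq_norm, ← sub_div, le_div_iff₀' hα1]
  exact norm_sub_sq_le_of_antitoneOn_anchor_neg_add (hanti s) hTt hts ht hbt
    (hS s (hSt.trans hts)).1

end EvenPotential

theorem differentiable_gradient_of_contDiff_two {Φ : H → ℝ} (hΦ : ContDiff ℝ 2 Φ) :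
    Differentiable ℝ (∇ Φ) :=
  (InnerProductSpace.toDual ℝ H).symm.differentiable.comp
    ((hΦ.fderiv_right (m := 1) le_rfl).differentiable one_ne_zero)

theorem stmt11_general {α β : ℝ} (hα : 3 < α) (hβ : 0 ≤ β) {Φ : H → ℝ}
    (hconv : ConvexOn ℝ univ Φ) (hΦ : Differentiable ℝ Φ) (heven : ∀ z, Φ (-z) = Φ z)
    {x v p : ℝ → H} (h : ∀ᶠ t in atTop, FirstOrderDINAVDAt α β Φ x v p t) :
    ∃ xstar : H, (∀ w, Φ xstar ≤ Φ w) ∧ Tendsto (fun t => ‖x t - xstar‖) atTop (𝓝 0) := by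
  have hz := apply_zero_le_of_convexOn_of_even hconv heven
  obtain ⟨y, hy⟩ := exists_tendsto_position_of_even h hα hβ hconv hΦ heven
  have hvalue : Φ y = Φ 0 :=
    tendsto_nhds_unique ((hΦ.continuous.tendsto y).comp hy) (tendsto_potential h hα hβ hconv hΦ hz)
  exact ⟨y, fun w => hvalue ▸ hz w, tendsto_iff_norm_sub_tendsto_zero.1 hy⟩

theorem stmt11 (α β t₀ : ℝ) (hα : 3 < α) (hβ : 0 < β) (ht₀ : 0 < t₀)
    (Φ : H → ℝ) (hconv : ConvexOn ℝ Set.univ Φ) (hΦ : ContDiff ℝ 2 Φ)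
    (heven : ∀ z : H, Φ (-z) = Φ z)
    (x x' x'' : ℝ → H) (hsol : IsDINAVDSolution α β t₀ Φ x x' x'') :
    ∃ xstar : H, (∀ w, Φ xstar ≤ Φ w) ∧
      Tendsto (fun t => ‖x t - xstar‖) atTop (𝓝 0) :=
  stmt11_general hα hβ.le hconv (hΦ.differentiable two_ne_zero) heven
    (hsol.eventually_firstOrderDINAVDAt (differentiable_gradient_of_contDiff_two hΦ))
end
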